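/- arXiv:0804.0563 — 2 statements merged into one kernel-verified Lean document; each statement's English description precedes it below -/
import Mathlib

section
/- (Projection onto the manifold) Let M be a compact connected m-dimensional smooth submanifold of ℝ^d without boundary, and let v ∈ W^{1,1}(Ω;ℝ^d) ∩ C^∞(Ω∖Σ;ℝ^d), where Σ is a finite union of subsets each contained in an (N−2)-dimensional submanifold of ℝ^N, with v(x) ∈ co(M) (the convex hull of M) for a.e. x ∈ Ω. Then there exists w ∈ W^{1,1}(Ω;M) such that w = v a.e. on the set {x ∈ Ω∖Σ : v(x) ∈ M} and ∫_Ω |∇w| dx ≤ C⋆ ∫_Ω |∇v| dx, where C⋆ > 0 is a constant depending only on d and M. -/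
open MeasureTheory Filter Set
open scoped ENNReal RealInnerProductSpace Topology NNReal

noncomputable section

/-- Euclidean space `ℝ^N`. -/
abbrev EN (N : ℕ) : Type := EuclideanSpace ℝ (Fin N)

/-- `d × N` matrices, viewed as continuous linear maps `ℝ^N → ℝ^d`. -/
abbrev Mat (d N : ℕ) : Type := EN N →L[ℝ] EN d

variable {N d : ℕ}

/-- The tangent set of `M ⊆ ℝ^d` at `s`: velocities of curves in `M` through `s`. -/
def TangentSet (M : Set (EN d)) (s : EN d) : Set (EN d) :=
  {v | ∃ γ : ℝ → EN d, (∀ t, γ t ∈ M) ∧ γ 0 = s ∧ HasDerivAt γ v 0}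

/-- A matrix `ξ ∈ ℝ^{d×N}` has all its columns in the tangent space `T_s M`,
i.e. `ξ ∈ [T_s M]^N`. -/
def TangentCols (M : Set (EN d)) (s : EN d) (ξ : Mat d N) : Prop :=
  ∀ i : Fin N, ξ (EuclideanSpace.single i 1) ∈ TangentSet M s

/-- `T` is a smooth `m`-dimensional submanifold (without boundary) of `ℝ^n`,
described locally as a regular level set. -/
def IsSubmanifoldDim (n m : ℕ) (T : Set (EN n)) : Prop :=
  ∀ x ∈ T, ∃ (U : Set (EN n)) (F : EN n → EN (n - m)),
    IsOpen U ∧ x ∈ U ∧ ContDiffOn ℝ (⊤ : ℕ∞) F U ∧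
    (T ∩ U = {y ∈ U | F y = 0}) ∧ ∀ y ∈ U, Function.Surjective (fderiv ℝ F y)

/-- `M` is a nonempty compact connected smooth submanifold of `ℝ^d` without boundary. -/
def IsNiceManifold (d : ℕ) (M : Set (EN d)) : Prop :=
  M.Nonempty ∧ IsCompact M ∧ IsConnected M ∧ ∃ m : ℕ, m ≤ d ∧ IsSubmanifoldDim d m M

/-- A finite union of subsets of `(N-2)`-dimensional submanifolds of `ℝ^N`. -/
def IsSigmaSet (N : ℕ) (Sg : Set (EN N)) : Prop :=
  ∃ (k : ℕ) (S : Fin k → Set (EN N)), Sg = ⋃ i, S i ∧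
    ∀ i, ∃ T : Set (EN N), IsSubmanifoldDim N (N - 2) T ∧ S i ⊆ T

/-- `u ∈ W^{1,1}(A;ℝ^d)` with weak gradient `Du`. -/
def MemW11 (A : Set (EN N)) (u : EN N → EN d) (Du : EN N → Mat d N) : Prop :=
  IntegrableOn u A volume ∧ IntegrableOn Du A volume ∧
    ∀ φ : EN N → ℝ, ContDiff ℝ (⊤ : ℕ∞) φ → HasCompactSupport φ → tsupport φ ⊆ A →
      ∀ y : EN N, ∫ x in A, fderiv ℝ φ x y • u x = - ∫ x in A, φ x • Du x y

/-- `u` takes values in `M` almost everywhere on `A`. -/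
def AeIn (A : Set (EN N)) (u : EN N → EN d) (M : Set (EN d)) : Prop :=
  ∀ᵐ x ∂(volume.restrict A), u x ∈ M

/-- Recession function of `h : ℝ^{d×N} → ℝ`: `h^∞(ξ) = limsup_{t→∞} h(tξ)/t`. -/
def recc (h : Mat d N → ℝ) (ξ : Mat d N) : ℝ :=
  Filter.limsup (fun t : ℝ => h (t • ξ) / t) Filter.atTop

/-- The open cube `(0,t)^N`. -/
def posCube (N : ℕ) (t : ℝ) : Set (EN N) := {x | ∀ i, x i ∈ Set.Ioo (0 : ℝ) t}

/-- The open unit cube `(-1/2,1/2)^N`. -/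
def unitCube (N : ℕ) : Set (EN N) := {x | ∀ i, x i ∈ Set.Ioo (-(1/2) : ℝ) (1/2)}

/-- The cell infimum over `W^{1,∞}_0((0,t)^N; T_s M)` defining `Tf_hom`. -/
def tanCell (f : EN N → Mat d N → ℝ) (M : Set (EN d)) (s : EN d) (ξ : Mat d N)
    (t : ℝ) : ℝ :=
  sInf {c : ℝ | ∃ (φ : EN N → EN d) (K : ℝ≥0), LipschitzWith K φ ∧
    (∀ x, φ x ∈ TangentSet M s) ∧ (∀ x, x ∉ posCube N t → φ x = 0) ∧
    c = (t ^ N)⁻¹ * ∫ x in posCube N t, f x (ξ + fderiv ℝ φ x)}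

/-- The tangentially homogenized density `Tf_hom` (the limit as `t → ∞`,
realized as a limsup). -/
def Tfhom (f : EN N → Mat d N → ℝ) (M : Set (EN d)) (s : EN d) (ξ : Mat d N) : ℝ :=
  Filter.limsup (fun t => tanCell f M s ξ t) Filter.atTop

/-- The unconstrained cell infimum over `W^{1,∞}_0((0,t)^N; ℝ^d)`. -/
def freeCell (h : EN N → Mat d N → ℝ) (ξ : Mat d N) (t : ℝ) : ℝ :=
  sInf {c : ℝ | ∃ (φ : EN N → EN d) (K : ℝ≥0), LipschitzWith K φ ∧
    (∀ x, x ∉ posCube N t → φ x = 0) ∧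
    c = (t ^ N)⁻¹ * ∫ x in posCube N t, h x (ξ + fderiv ℝ φ x)}

/-- The usual homogenized density of a parametrized integrand `g(y,s,ξ)`. -/
def ghomOf (g : EN N → EN d → Mat d N → ℝ) (s : EN d) (ξ : Mat d N) : ℝ :=
  Filter.limsup (fun t => freeCell (fun y => g y s) ξ t) Filter.atTop

/-- The open cube of side `t` centered at the origin adapted to the
orthonormal basis `B`. -/
def obCube (B : OrthonormalBasis (Fin N) ℝ (EN N)) (t : ℝ) : Set (EN N) :=
  {x | ∀ i, ⟪x, B i⟫ ∈ Set.Ioo (-(t / 2)) (t / 2)}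

/-- Surface cell infimum at scale `t`: infimum of `t^{1-N} ∫_{tQ_ν} h(y,∇φ)` over
`φ ∈ W^{1,1}(tQ_ν;M)` with `φ = a` on `∂(tQ_ν) ∩ {x·ν₁ > 0}` and `φ = b`
on `∂(tQ_ν) ∩ {x·ν₁ ≤ 0}`. -/
def surfCell (h : EN N → Mat d N → ℝ) (M : Set (EN d)) (a b : EN d) (ν₁ : EN N)
    (B : OrthonormalBasis (Fin N) ℝ (EN N)) (t : ℝ) : ℝ :=
  sInf {c : ℝ | ∃ (φ : EN N → EN d) (Dφ : EN N → Mat d N),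
    MemW11 (obCube B t) φ Dφ ∧ AeIn (obCube B t) φ M ∧
    (∀ x ∈ frontier (obCube B t),
      (0 < ⟪x, ν₁⟫ → φ x = a) ∧ (⟪x, ν₁⟫ ≤ 0 → φ x = b)) ∧
    c = (t ^ (N - 1))⁻¹ * ∫ x in obCube B t, h x (Dφ x)}

/-- Surface cell infimum where moreover the adapted cube is chosen with two of
its faces orthogonal to `ν₁`. -/
def thetaCell (h : EN N → Mat d N → ℝ) (M : Set (EN d)) (a b : EN d) (ν₁ : EN N)
    (t : ℝ) : ℝ :=
  sInf {c : ℝ | ∃ B : OrthonormalBasis (Fin N) ℝ (EN N), (∃ i, B i = ν₁) ∧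
    c = surfCell h M a b ν₁ B t}

/-- The homogenized surface energy density `θ_hom` (built from `f^∞`). -/
def thetaHom (f : EN N → Mat d N → ℝ) (M : Set (EN d)) (a b : EN d) (ν₁ : EN N) : ℝ :=
  Filter.limsup (fun t => thetaCell (fun y => recc (f y)) M a b ν₁ t) Filter.atTop

/-- Strong `L¹(A;ℝ^d)`-convergence of a family `v ε → u` as `ε → 0⁺`. -/
def TendstoL1 (A : Set (EN N)) (v : ℝ → EN N → EN d) (u : EN N → EN d) : Prop :=
  Filter.Tendsto (fun ε => ∫ x in A, ‖v ε x - u x‖) (nhdsWithin 0 (Set.Ioi 0)) (nhds 0)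

/-- Γ-convergence as `ε → 0⁺` of the family `Fε` at the point `u`
(for the strong `L¹(A)`-topology) to the value `c`. -/
def GammaConvergesAt (Fε : ℝ → (EN N → EN d) → ℝ≥0∞) (A : Set (EN N))
    (u : EN N → EN d) (c : ℝ≥0∞) : Prop :=
  (∀ v : ℝ → EN N → EN d, TendstoL1 A v u →
      c ≤ Filter.liminf (fun ε => Fε ε (v ε)) (nhdsWithin 0 (Set.Ioi 0))) ∧
  (∃ v : ℝ → EN N → EN d, TendstoL1 A v u ∧
      Filter.limsup (fun ε => Fε ε (v ε)) (nhdsWithin 0 (Set.Ioi 0)) ≤ c)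

/-- The localized functional `F_ε(u,A) = ∫_A f(x/ε,∇u) dx` if
`u ∈ W^{1,1}(A;M)`, and `+∞` otherwise. -/
def FepsSet (f : EN N → Mat d N → ℝ) (M : Set (EN d)) (ε : ℝ) (u : EN N → EN d)
    (A : Set (EN N)) : ℝ≥0∞ :=
  ⨅ (Du : EN N → Mat d N) (_ : MemW11 A u Du ∧ AeIn A u M),
    ENNReal.ofReal (∫ x in A, f (ε⁻¹ • x) (Du x))

/-- The localized Γ-lower limit
`F(u,A) = inf { liminf_n F_{ε_n}(u_n,A) : u_n → u in L¹(A) }`. -/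
def GammaLow (f : EN N → Mat d N → ℝ) (M : Set (EN d)) (εseq : ℕ → ℝ)
    (u : EN N → EN d) (A : Set (EN N)) : ℝ≥0∞ :=
  ⨅ (v : ℕ → EN N → EN d)
    (_ : Filter.Tendsto (fun n => ∫ x in A, ‖v n x - u x‖) Filter.atTop (nhds 0)),
    Filter.liminf (fun n => FepsSet f M (εseq n) (v n) A) Filter.atTop

/-- Extension of `F(u,·)` to arbitrary sets `B ⊆ Ω` by outer regularity. -/
def GammaLowB (f : EN N → Mat d N → ℝ) (M : Set (EN d)) (εseq : ℕ → ℝ)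
    (u : EN N → EN d) (Ω B : Set (EN N)) : ℝ≥0∞ :=
  ⨅ (A : Set (EN N)) (_ : IsOpen A ∧ A ⊆ Ω ∧ B ⊆ A), GammaLow f M εseq u A

/-- A package certifying `u ∈ BV(Ω;ℝ^d)`, with all its measure-theoretic
attributes: absolutely continuous gradient `grad = ∇u`, approximate
discontinuity (jump) set `S`, traces `up = u⁺`, `um = u⁻`, normal `nu = ν_u`,
approximate limit `ap = ũ`, Cantor part `cm = |D^c u|` with polar density
`cd = dD^cu/d|D^cu|`. -/
structure BVPack (Ω : Set (EN N)) (u : EN N → EN d) where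
  grad : EN N → Mat d N
  S : Set (EN N)
  up : EN N → EN d
  um : EN N → EN d
  nu : EN N → EN N
  ap : EN N → EN d
  cm : Measure (EN N)
  cd : EN N → Mat d N
  integrable : IntegrableOn u Ω volume
  grad_int : IntegrableOn grad Ω volume
  S_meas : MeasurableSet S
  cm_fin : cm Set.univ ≠ ⊤
  cm_in : cm Ωᶜ = 0
  jump_int : IntegrableOn (fun x => ‖up x - um x‖) (Ω ∩ S) (μH[(N : ℝ) - 1])
  nu_unit : ∀ x ∈ S, ‖nu x‖ = 1
  jump_ne : ∀ x ∈ S, up x ≠ um x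
  cd_unit : ∀ᵐ x ∂cm, ‖cd x‖ = 1
  cm_sing : cm ⟂ₘ (volume : Measure (EN N))
  cm_nojump : cm S = 0
  ap_lim : ∀ x ∈ Ω \ S,
    Filter.Tendsto
      (fun r : ℝ => (volume (Metric.ball x r)).toReal⁻¹ *
        ∫ y in Metric.ball x r, ‖u y - ap x‖)
      (nhdsWithin 0 (Set.Ioi 0)) (nhds 0)
  jump_lim_up : ∀ x ∈ Ω ∩ S,
    Filter.Tendsto
      (fun r : ℝ => (volume (Metric.ball x r)).toReal⁻¹ *
        ∫ y in {y ∈ Metric.ball x r | 0 < ⟪y - x, nu x⟫}, ‖u y - up x‖)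
      (nhdsWithin 0 (Set.Ioi 0)) (nhds 0)
  jump_lim_um : ∀ x ∈ Ω ∩ S,
    Filter.Tendsto
      (fun r : ℝ => (volume (Metric.ball x r)).toReal⁻¹ *
        ∫ y in {y ∈ Metric.ball x r | ⟪y - x, nu x⟫ < 0}, ‖u y - um x‖)
      (nhdsWithin 0 (Set.Ioi 0)) (nhds 0)
  decomp : ∀ φ : EN N → ℝ, ContDiff ℝ (⊤ : ℕ∞) φ → HasCompactSupport φ → tsupport φ ⊆ Ω →
    ∀ y : EN N,
      ∫ x in Ω, fderiv ℝ φ x y • u x =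
        -(∫ x in Ω, φ x • grad x y) - (∫ x, φ x • cd x y ∂cm) -
          ∫ x in Ω ∩ S, (⟪nu x, y⟫ * φ x) • (up x - um x) ∂(μH[(N : ℝ) - 1])

/-- The total variation measure `|Du|` associated to a BV package. -/
def totalVar (Ω : Set (EN N)) (u : EN N → EN d) (P : BVPack Ω u) : Measure (EN N) :=
  ((volume.restrict Ω).withDensity fun x => ENNReal.ofReal ‖P.grad x‖) + P.cm +
    ((μH[(N : ℝ) - 1]).restrict (Ω ∩ P.S)).withDensity
      fun x => ENNReal.ofReal ‖P.up x - P.um x‖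

/-- The standing assumptions (Carathéodory, (H1), (H2), (H3)) on the
integrand `f`. -/
structure StdIntegrand (N d : ℕ) (f : EN N → Mat d N → ℝ) (α β L : ℝ) : Prop where
  meas : ∀ ξ : Mat d N, Measurable fun y => f y ξ
  nonneg : ∀ y ξ, 0 ≤ f y ξ
  periodic : ∀ (y : EN N) (ξ : Mat d N) (i : Fin N),
    f (y + EuclideanSpace.single i 1) ξ = f y ξ
  alpha_pos : 0 < α
  alpha_le_beta : α ≤ β
  growth : ∀ᵐ y ∂(volume : Measure (EN N)), ∀ ξ,
    α * ‖ξ‖ ≤ f y ξ ∧ f y ξ ≤ β * (1 + ‖ξ‖)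
  lip_pos : 0 < L
  lip : ∀ᵐ y ∂(volume : Measure (EN N)), ∀ ξ ξ', |f y ξ - f y ξ'| ≤ L * ‖ξ - ξ'‖

/-- Hypothesis (H4): `|f(y,ξ) - f^∞(y,ξ)| ≤ C(1+|ξ|^{1-q})`. -/
def H4 (f : EN N → Mat d N → ℝ) (C q : ℝ) : Prop :=
  0 < C ∧ 0 < q ∧ q < 1 ∧
    ∀ᵐ y ∂(volume : Measure (EN N)), ∀ ξ,
      |f y ξ - recc (f y) ξ| ≤ C * (1 + ‖ξ‖ ^ (1 - q))

/-- The projection data used to build the modified integrand `g`: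
`pr` is the nearest-point projection onto `M` on a `δ₀`-neighborhood,
`tanProj s` is the orthogonal projection of `ℝ^d` onto `T_s M` (for `s ∈ M`),
and `chi` is the smooth cut-off. -/
structure ProjData {d : ℕ} (M : Set (EN d)) where
  δ₀ : ℝ
  pr : EN d → EN d
  chi : EN d → ℝ
  tanProj : EN d → EN d →L[ℝ] EN d
  δ₀_pos : 0 < δ₀
  pr_mem : ∀ s, Metric.infDist s M < δ₀ → pr s ∈ M
  pr_nearest : ∀ s, Metric.infDist s M < δ₀ → ‖s - pr s‖ = Metric.infDist s M
  pr_lip : ∃ K : ℝ≥0, LipschitzOnWith K pr {s | Metric.infDist s M < δ₀}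
  tanProj_lip : ∃ K : ℝ≥0,
    LipschitzOnWith K (fun s => tanProj (pr s)) {s | Metric.infDist s M < δ₀}
  chi_smooth : ContDiff ℝ (⊤ : ℕ∞) chi
  chi_supp : HasCompactSupport chi
  chi_range : ∀ s, chi s ∈ Set.Icc (0 : ℝ) 1
  chi_one : ∀ s, Metric.infDist s M ≤ δ₀ / 2 → chi s = 1
  chi_zero : ∀ s, 3 * δ₀ / 4 ≤ Metric.infDist s M → chi s = 0
  tanProj_mem : ∀ s ∈ M, ∀ v, tanProj s v ∈ TangentSet M s
  tanProj_id : ∀ s ∈ M, ∀ v ∈ TangentSet M s, tanProj s v = v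
  tanProj_symm : ∀ s ∈ M, ∀ v w, ⟪tanProj s v, w⟫ = ⟪v, tanProj s w⟫

/-- The cut-off tangential projection `ℙ_s(ξ) = χ(s) P_{Π(s)} ∘ ξ`. -/
def tanP {M : Set (EN d)} (D : ProjData M) (s : EN d) (ξ : Mat d N) : Mat d N :=
  D.chi s • ((D.tanProj (D.pr s)).comp ξ)

/-- The modified integrand `g(y,s,ξ) = f(y,ℙ_s(ξ)) + |ξ - ℙ_s(ξ)|`. -/
def gOf {M : Set (EN d)} (D : ProjData M) (f : EN N → Mat d N → ℝ) :
    EN N → EN d → Mat d N → ℝ :=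
  fun y s ξ => f y (tanP D s ξ) + ‖ξ - tanP D s ξ‖

/-- The geodesic distance on `M`. -/
def geoDist (M : Set (EN d)) (a b : EN d) : ℝ :=
  sInf {l : ℝ | ∃ γ : ℝ → EN d, ContDiff ℝ (⊤ : ℕ∞) γ ∧ (∀ t, γ t ∈ M) ∧
    γ 0 = b ∧ γ 1 = a ∧ l = ∫ t in Set.Icc (0 : ℝ) 1, ‖deriv γ t‖}

/-- The class `G(a,b)` of geodesic curves between `a` and `b`. -/
def GeodClass (M : Set (EN d)) (a b : EN d) : Set (ℝ → EN d) :=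
  {γ | ContDiff ℝ (⊤ : ℕ∞) γ ∧ (∀ t, γ t ∈ M) ∧ (∀ t : ℝ, 1 / 2 ≤ t → γ t = a) ∧
    (∀ t : ℝ, t ≤ -(1 / 2 : ℝ) → γ t = b) ∧
    (∫ t : ℝ, ‖deriv γ t‖) = geoDist M a b}

/-- `I_ε(a,b,ν)`: infimum of `∫_{Q_ν} h(x/ε,∇u)` over the geodesic-boundary
class `B_ε(a,b,ν)`. -/
def Ieps (h : EN N → Mat d N → ℝ) (M : Set (EN d)) (a b : EN d) (ν₁ : EN N)
    (B : OrthonormalBasis (Fin N) ℝ (EN N)) (ε : ℝ) : ℝ :=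
  sInf {c : ℝ | ∃ (φ : EN N → EN d) (Dφ : EN N → Mat d N) (γ : ℝ → EN d),
    γ ∈ GeodClass M a b ∧ MemW11 (obCube B 1) φ Dφ ∧ AeIn (obCube B 1) φ M ∧
    (∀ x ∈ frontier (obCube B 1), φ x = γ (⟪x, ν₁⟫ / ε)) ∧
    c = ∫ x in obCube B 1, h (ε⁻¹ • x) (Dφ x)}

/-- `J_ε(a,b,ν)`: infimum of `∫_{Q_ν} h(x/ε,∇u)` with sharp-interface boundary
datum `u_{a,b,ν}`. -/
def Jeps (h : EN N → Mat d N → ℝ) (M : Set (EN d)) (a b : EN d) (ν₁ : EN N)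
    (B : OrthonormalBasis (Fin N) ℝ (EN N)) (ε : ℝ) : ℝ :=
  sInf {c : ℝ | ∃ (φ : EN N → EN d) (Dφ : EN N → Mat d N),
    MemW11 (obCube B 1) φ Dφ ∧ AeIn (obCube B 1) φ M ∧
    (∀ x ∈ frontier (obCube B 1),
      (0 < ⟪x, ν₁⟫ → φ x = a) ∧ (⟪x, ν₁⟫ ≤ 0 → φ x = b)) ∧
    c = ∫ x in obCube B 1, h (ε⁻¹ • x) (Dφ x)}

/-- The defining properties of the interfacial density `K` from the integral
representation on partitions. -/
def IsJumpRepr (Ω : Set (EN N)) (f : EN N → Mat d N → ℝ) (M : Set (EN d))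
    (εseq : ℕ → ℝ) (K : EN d → EN d → EN N → ℝ) : Prop :=
  (∀ a ∈ M, ∀ b ∈ M, ∀ ν₁ : EN N, ‖ν₁‖ = 1 → 0 ≤ K a b ν₁) ∧
  (∀ a ∈ M, ∀ b ∈ M, ContinuousOn (K a b) (Metric.sphere (0 : EN N) 1)) ∧
  (∀ a ∈ M, ∀ b ∈ M, ∀ ν₁ : EN N, ‖ν₁‖ = 1 → K a b ν₁ = K b a (-ν₁)) ∧
  (∀ T : Finset (EN d), (T : Set (EN d)) ⊆ M →
    ∀ (u : EN N → EN d) (P : BVPack Ω u),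
      (∀ᵐ x ∂(volume.restrict Ω), u x ∈ (T : Set (EN d))) →
      ∀ S : Set (EN N), MeasurableSet S → S ⊆ Ω ∩ P.S →
        GammaLowB f M εseq u Ω S =
          ENNReal.ofReal
            (∫ x in S, K (P.up x) (P.um x) (P.nu x) ∂(μH[(N : ℝ) - 1])))

end

/-!
The map `w` is a composition `Φ ∘ v`, where `Φ : ℝ^d → M` is the identity on `M` and is Lipschitz
with constant `C / S` away from the zero set of a `1`-Lipschitz function `S`. Near `M` one takes a
Lipschitz retraction `r`, far away a constant `q₀ ∈ M`, and one interpolates close to the level set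
`dist(·, M) = s` by sliding: over a ball around `p ∈ M`, the point `r y` is contracted to `p` inside
`M` and then moved along a Lipschitz path from `p` to `q₀`. The slides attached to the points `p` of
a finite net do not match, and `S` measures the distance to the set of codimension two where they
meet, the level set intersected with the spheres of radius `b` around the points `p`.

In dimension two `‖·‖⁻¹` is locally integrable, so `1 / S` is integrable with respect to the
parameters `(s, b)`, uniformly in the point at which it is evaluated. Averaging over `(s, b)` gives
a choice for which `S (v x) > 0` almost everywhere and `∫ |∇v| / S(v) ≤ A ∫ |∇v|`, and the chain
rule inequality `|∇(Φ ∘ v)| ≤ C |∇v| / S(v)` concludes. Since `Φ ∘ v` is not known to be weakly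
differentiable in advance, this inequality is first proved after testing with a smooth function;
Riesz representation in a weighted `L²` space then produces the weak gradient.
-/

section Reach

variable {E G : Type*} [NormedAddCommGroup E] [NormedAddCommGroup G] [NormedSpace ℝ G]

theorem eventually_exists_rightInverse_norm_le [NormedSpace ℝ E] [CompleteSpace G] {A₀ : E →L[ℝ] G}
    (hA₀ : A₀.HasRightInverse) :
    ∃ C : ℝ, ∀ᶠ A in 𝓝 A₀, ∃ R : G →L[ℝ] E, (∀ z, A (R z) = z) ∧ ‖R‖ ≤ C := by
  obtain ⟨R, hR⟩ := hA₀
  have hunit : A₀.comp R = ((1 : (G →L[ℝ] G)ˣ) : G →L[ℝ] G) := by ext z; exact hR z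
  have hcomp : Continuous fun A : E →L[ℝ] G ↦ A.comp R := continuous_id.clm_comp_const R
  have hinv : ContinuousAt (fun A : E →L[ℝ] G ↦ ‖R.comp (Ring.inverse (A.comp R))‖) A₀ := by
    have h := NormedRing.inverse_continuousAt (1 : (G →L[ℝ] G)ˣ)
    rw [← hunit] at h
    exact (continuousAt_const.clm_comp (h.comp (f := fun A : E →L[ℝ] G ↦ A.comp R)
      hcomp.continuousAt)).norm
  have hopen : ∀ᶠ A in 𝓝 A₀, IsUnit (A.comp R) :=
    hcomp.continuousAt.eventually_mem (Units.isOpen.mem_nhds (hunit ▸ Units.isUnit 1))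
  refine ⟨_, (hopen.and (hinv.eventually_lt_const (lt_add_one _))).mono fun A hA ↦
    ⟨R.comp (Ring.inverse (A.comp R)), fun z ↦ ?_, hA.2.le⟩⟩
  exact DFunLike.congr_fun (Ring.mul_inverse_cancel _ hA.1) z

theorem norm_sub_sub_apply_le_of_lipschitzOnWith [NormedSpace ℝ E] {F : E → G} {F' : E → E →L[ℝ] G}
    {L : ℝ≥0} {s : Set E} (hs : Convex ℝ s) (hF : ∀ x ∈ s, HasFDerivAt F (F' x) x)
    (hL : LipschitzOnWith L F' s) {p q : E} (hp : p ∈ s) (hq : q ∈ s) :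
    ‖F q - F p - F' p (q - p)‖ ≤ L * ‖q - p‖ ^ 2 := by
  have hseg : segment ℝ p q ⊆ s := hs.segment_subset hp hq
  have hbound : ∀ x ∈ segment ℝ p q, ‖F' x - F' p‖ ≤ L * ‖q - p‖ := fun x hx ↦
    (hL.norm_sub_le (hseg hx) hp).trans <| by
      gcongr
      obtain ⟨θ, hθ, rfl⟩ := segment_eq_image_lineMap ℝ p q ▸ hx
      rw [← dist_eq_norm, ← dist_eq_norm, dist_comm q, dist_lineMap_left, Real.norm_of_nonneg hθ.1]
      exact mul_le_of_le_one_left dist_nonneg hθ.2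
  rw [sq, ← mul_assoc]
  exact (convex_segment p q).norm_image_sub_le_of_norm_hasFDerivWithin_le'
    (fun x hx ↦ (hF x (hseg hx)).hasFDerivWithinAt) hbound (left_mem_segment ℝ p q)
    (right_mem_segment ℝ p q)

variable [InnerProductSpace ℝ E]

theorem inner_sub_eq_zero_of_isLocalMinOn_dist [CompleteSpace E] [CompleteSpace G]
    {F : E → G} {F' : E →L[ℝ] G} {p y h : E} (hF : HasStrictFDerivAt F F' p)
    (hsurj : Function.Surjective F') (hmin : IsLocalMinOn (dist y) {q | F q = F p} p)
    (hh : F' h = 0) : ⟪y - p, h⟫ = 0 := by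
  have hextr : IsLocalExtrOn (fun q ↦ ‖y - q‖ ^ 2) {q | F q = F p} p := by
    refine .inl (hmin.mono fun q hq ↦ ?_)
    simp only [dist_eq_norm] at hq
    exact pow_le_pow_left₀ (norm_nonneg _) hq 2
  obtain ⟨Λ, Λ₀, hne, hΛ⟩ := hextr.exists_linear_map_of_hasStrictFDerivAt hF
    ((hasStrictFDerivAt_norm_sq (y - p)).comp p ((hasStrictFDerivAt_id p).const_sub y))
  have hΛ₀ : Λ₀ ≠ 0 := by
    rintro rfl
    refine hne (Prod.ext (LinearMap.ext fun z ↦ ?_) rfl)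
    obtain ⟨x, rfl⟩ := hsurj z
    simpa using hΛ x
  simpa [hh, hΛ₀, inner_sub_left] using hΛ h

/-- `HasReachBound C s t`: the points of `t` deviate at most quadratically from the tangent spaces
of `t` at the points of `s`. When `s = t` this says that `t` has reach at least `1 / (2 * C)` in the
sense of Federer. Two sets are used so that the bound can be localized in the base point. -/
def HasReachBound (C : ℝ) (s t : Set E) : Prop :=
  ∀ p ∈ s, ∀ y, IsMinOn (dist y) t p → ∀ q ∈ t, ⟪y - p, q - p⟫ ≤ C * ‖y - p‖ * ‖q - p‖ ^ 2

theorem HasReachBound.mono {C C' : ℝ} {s s' t : Set E} (h : HasReachBound C s t) (hC : C ≤ C')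
    (hs : s' ⊆ s) : HasReachBound C' s' t := fun p hp y hy q hq ↦
  (h p (hs hp) y hy q hq).trans (by gcongr)

theorem HasReachBound.union {C : ℝ} {s s' t : Set E} (h : HasReachBound C s t)
    (h' : HasReachBound C s' t) : HasReachBound C (s ∪ s') t := fun p hp ↦
  hp.elim (h p) (h' p)

theorem hasReachBound_of_forall_near {s t : Set E} {C η : ℝ} (hη : 0 < η)
    (h : ∀ p ∈ s, ∀ y, IsMinOn (dist y) t p → ∀ q ∈ t, dist q p < η →
      ⟪y - p, q - p⟫ ≤ C * ‖y - p‖ * ‖q - p‖ ^ 2) :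
    HasReachBound (max C (1 / η)) s t := by
  intro p hp y hy q hq
  rcases lt_or_ge (dist q p) η with hqp | hqp
  · refine (h p hp y hy q hq hqp).trans ?_
    gcongr
    exact le_max_left _ _
  · have hone : 1 ≤ 1 / η * ‖q - p‖ := by
      rwa [one_div_mul_eq_div, one_le_div hη, ← dist_eq_norm]
    calc ⟪y - p, q - p⟫ ≤ ‖y - p‖ * ‖q - p‖ * 1 := by
          rw [mul_one]; exact real_inner_le_norm _ _
      _ ≤ ‖y - p‖ * ‖q - p‖ * (1 / η * ‖q - p‖) := by gcongr
      _ = 1 / η * ‖y - p‖ * ‖q - p‖ ^ 2 := by ring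
      _ ≤ _ := by gcongr; exact le_max_right _ _

/-- The tangential part of `q - p` contributes nothing to `⟪y - p, q - p⟫`, and by Taylor's formula
the remaining part is of size `‖q - p‖ ^ 2`. -/
theorem inner_sub_le_of_isMinOn_dist_levelSet [CompleteSpace E] [CompleteSpace G]
    {F : E → G} {F' : E → E →L[ℝ] G} {B M : Set E} {L : ℝ≥0} {C : ℝ} (hBo : IsOpen B)
    (hBc : Convex ℝ B) (hM : M ∩ B = {x ∈ B | F x = 0})
    (hF : ∀ x ∈ B, HasStrictFDerivAt F (F' x) x) (hL : LipschitzOnWith L F' B)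
    {p : E} (hpM : p ∈ M) (hpB : p ∈ B)
    (hR : ∃ R : G →L[ℝ] E, (∀ z, F' p (R z) = z) ∧ ‖R‖ ≤ C)
    {y : E} (hy : IsMinOn (dist y) M p) {q : E} (hqM : q ∈ M) (hqB : q ∈ B) :
    ⟪y - p, q - p⟫ ≤ C * L * ‖y - p‖ * ‖q - p‖ ^ 2 := by
  obtain ⟨R, hR, hRC⟩ := hR
  have hFp : F p = 0 := (hM.subset ⟨hpM, hpB⟩).2
  have hFq : F q = 0 := (hM.subset ⟨hqM, hqB⟩).2
  have hmin : IsLocalMinOn (dist y) {x | F x = F p} p := by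
    filter_upwards [mem_nhdsWithin_of_mem_nhds (hBo.mem_nhds hpB), self_mem_nhdsWithin]
      with x hxB hx
    exact hy (hM.superset ⟨hxB, hx.trans hFp⟩).1
  set z := F' p (q - p)
  have hztaylor : ‖z‖ ≤ L * ‖q - p‖ ^ 2 := by
    have htaylor := norm_sub_sub_apply_le_of_lipschitzOnWith hBc
      (fun x hx ↦ (hF x hx).hasFDerivAt) hL hpB hqB
    rwa [hFp, hFq, sub_zero, zero_sub, norm_neg] at htaylor
  have htangent : ⟪y - p, q - p - R z⟫ = 0 :=
    inner_sub_eq_zero_of_isLocalMinOn_dist (hF p hpB) (fun w ↦ ⟨R w, hR w⟩) hmin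
      (by rw [map_sub, hR, sub_self])
  calc ⟪y - p, q - p⟫ = ⟪y - p, R z⟫ := by rwa [inner_sub_right, sub_eq_zero] at htangent
    _ ≤ ‖y - p‖ * (C * (L * ‖q - p‖ ^ 2)) := by
        refine (real_inner_le_norm _ _).trans ?_
        gcongr
        exact (R.le_of_opNorm_le hRC z).trans (by gcongr; exact (norm_nonneg R).trans hRC)
    _ = C * L * ‖y - p‖ * ‖q - p‖ ^ 2 := by ring

end Reach

theorem IsSubmanifoldDim.exists_hasReachBound_nhds {n m : ℕ} {M : Set (EN n)}
    (hM : IsSubmanifoldDim n m M) {p₀ : EN n} (hp₀ : p₀ ∈ M) :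
    ∃ C, ∃ s ∈ 𝓝[M] p₀, HasReachBound C s M := by
  obtain ⟨U, F, hU, hpU, hF, hMU, hsurj⟩ := hM p₀ hp₀
  have hderiv : ContDiffAt ℝ 1 (fderiv ℝ F) p₀ :=
    (hF.fderiv_of_isOpen hU (m := 1) (by norm_cast)).contDiffAt (hU.mem_nhds hpU)
  obtain ⟨L, W, hW, hL⟩ := hderiv.exists_lipschitzOnWith
  obtain ⟨R₀, hR₀⟩ := (fderiv ℝ F p₀).toLinearMap.exists_rightInverse_of_surjective
    (LinearMap.range_eq_top.2 (hsurj p₀ hpU))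
  obtain ⟨C, hC⟩ := eventually_exists_rightInverse_norm_le (A₀ := fderiv ℝ F p₀)
    ⟨R₀.toContinuousLinearMap, fun z ↦ LinearMap.congr_fun hR₀ z⟩
  obtain ⟨η, hη, hball⟩ := Metric.eventually_nhds_iff_ball.1
    (((hU.eventually_mem hpU).and hW).and (hderiv.continuousAt.eventually hC))
  have hMB : M ∩ Metric.ball p₀ η = {x ∈ Metric.ball p₀ η | F x = 0} := by
    ext x
    have := Set.ext_iff.1 hMU x
    have := hball x
    simp only [mem_inter_iff, mem_ofPred_eq] at *
    tauto
  refine ⟨_, M ∩ Metric.ball p₀ (η / 2),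
    inter_mem_nhdsWithin _ (Metric.ball_mem_nhds _ (half_pos hη)),
    hasReachBound_of_forall_near (C := C * L) (half_pos hη) fun p hp y hy q hq hqp ↦ ?_⟩
  have hpη : dist p p₀ < η / 2 := hp.2
  have hqη : dist q p₀ < η := by linarith [dist_triangle q p p₀]
  exact inner_sub_le_of_isMinOn_dist_levelSet Metric.isOpen_ball (convex_ball p₀ η) hMB
    (fun x hx ↦ (hF.contDiffAt (hU.mem_nhds (hball x hx).1.1)).hasStrictFDerivAt (by simp))
    (hL.mono fun x hx ↦ (hball x hx).1.2) hp.1 (Metric.ball_subset_ball (half_le_self hη.le) hp.2)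
    (hball p (hpη.trans (half_lt_self hη))).2 hy hq hqη

theorem IsSubmanifoldDim.exists_hasReachBound {n m : ℕ} {M : Set (EN n)}
    (hM : IsSubmanifoldDim n m M) (hc : IsCompact M) : ∃ C, HasReachBound C M M := by
  refine hc.induction_on (p := fun s ↦ ∃ C, HasReachBound C s M) ⟨0, fun p hp ↦ hp.elim⟩
    (fun s t hst ⟨C, hC⟩ ↦ ⟨C, hC.mono le_rfl hst⟩) ?_ fun p hp ↦ ?_
  · rintro s t ⟨C, hC⟩ ⟨C', hC'⟩
    exact ⟨max C C', (hC.mono (le_max_left _ _) subset_rfl).union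
      (hC'.mono (le_max_right _ _) subset_rfl)⟩
  · obtain ⟨C, s, hs, h⟩ := hM.exists_hasReachBound_nhds hp
    exact ⟨s, hs, C, h⟩

section Retraction

theorem HasReachBound.dist_le_two_mul_dist {E : Type*} [NormedAddCommGroup E]
    [InnerProductSpace ℝ E] {C : ℝ} {M : Set E} (h : HasReachBound C M M) {y z p q : E}
    (hp : p ∈ M) (hq : q ∈ M) (hy : IsMinOn (dist y) M p) (hz : IsMinOn (dist z) M q)
    (hyC : C * ‖y - p‖ ≤ 1 / 4) (hzC : C * ‖z - q‖ ≤ 1 / 4) : dist p q ≤ 2 * dist y z := by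
  rw [dist_eq_norm, dist_eq_norm]
  have hyq : ⟪y - p, q - p⟫ ≤ 1 / 4 * ‖p - q‖ ^ 2 := by
    rw [norm_sub_rev p q]
    exact (h p hp y hy q hq).trans (by gcongr)
  have hzp : ⟪z - q, p - q⟫ ≤ 1 / 4 * ‖p - q‖ ^ 2 := (h q hq z hz p hp).trans (by gcongr)
  have hcs : ⟪y - z, p - q⟫ ≤ ‖y - z‖ * ‖p - q‖ := real_inner_le_norm _ _
  have hsplit : ‖p - q‖ ^ 2 = ⟪y - p, q - p⟫ + ⟪z - q, p - q⟫ + ⟪y - z, p - q⟫ := by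
    rw [← real_inner_self_eq_norm_sq, ← neg_sub p q, inner_neg_right, ← sub_eq_neg_add,
      ← inner_sub_left, ← inner_add_left]
    congr 1
    abel
  rcases (norm_nonneg (p - q)).eq_or_lt with h0 | hpos
  · rw [← h0]; positivity
  · exact le_of_mul_le_mul_right (by nlinarith) hpos

/-- `M` is a retract of one of its metric thickenings, by a Lipschitz retraction. -/
def IsLipschitzNhdRetract {X : Type*} [PseudoMetricSpace X] (M : Set X) : Prop :=
  ∃ δ > 0, ∃ (K : ℝ≥0) (r : X → X), MapsTo r (Metric.thickening δ M) M ∧ EqOn r id M ∧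
    LipschitzOnWith K r (Metric.thickening δ M)

theorem HasReachBound.isLipschitzNhdRetract {E : Type*} [NormedAddCommGroup E]
    [InnerProductSpace ℝ E] {C : ℝ} {M : Set E} (h : HasReachBound C M M) (hc : IsCompact M) :
    IsLipschitzNhdRetract M := by
  rcases M.eq_empty_or_nonempty with rfl | hne
  · exact ⟨1, one_pos, 0, id, by simp [MapsTo], by simp, by simp⟩
  have : 0 < max C 1 := lt_max_of_lt_right one_pos
  choose r hrM hr using fun y ↦ hc.exists_infDist_eq_dist hne y
  have hmin : ∀ y, IsMinOn (dist y) M (r y) := fun y q hq ↦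
    (hr y).symm.trans_le (Metric.infDist_le_dist_of_mem hq)
  have hclose : ∀ y ∈ Metric.thickening (1 / (4 * max C 1)) M, max C 1 * ‖y - r y‖ ≤ 1 / 4 := by
    intro y hy
    rw [Metric.mem_thickening_iff_infDist_lt hne, hr, lt_div_iff₀ (by positivity),
      dist_eq_norm] at hy
    linarith
  refine ⟨1 / (4 * max C 1), by positivity, 2, r, fun y _ ↦ hrM y, fun p hp ↦ ?_,
    .of_dist_le_mul fun y hy z hz ↦ ?_⟩
  · have : dist p (r p) ≤ 0 := (hmin p hp).trans_eq (dist_self p)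
    exact (dist_le_zero.1 this).symm
  · exact (h.mono (le_max_left C 1) subset_rfl).dist_le_two_mul_dist (hrM y) (hrM z) (hmin y)
      (hmin z) (hclose y hy) (hclose z hz)

theorem IsSubmanifoldDim.isLipschitzNhdRetract {n m : ℕ} {M : Set (EN n)}
    (hM : IsSubmanifoldDim n m M) (hc : IsCompact M) : IsLipschitzNhdRetract M :=
  let ⟨_, h⟩ := hM.exists_hasReachBound hc
  h.isLipschitzNhdRetract hc

/-- `p` and `q` are joined by a Lipschitz path in `M`. The path is extended to all of `ℝ` by the
constants `p` and `q`, so that no endpoint conditions are needed when paths are concatenated. -/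
def LipschitzJoinedIn {X : Type*} [PseudoEMetricSpace X] (M : Set X) (p q : X) : Prop :=
  ∃ (K : ℝ≥0) (γ : ℝ → X), LipschitzWith K γ ∧ (∀ t, γ t ∈ M) ∧ (∀ t ≤ 0, γ t = p) ∧
    ∀ t ≥ 1, γ t = q

theorem LipschitzJoinedIn.trans {E : Type*} [SeminormedAddCommGroup E] {M : Set E} {p q s : E}
    (hpq : LipschitzJoinedIn M p q) (hqs : LipschitzJoinedIn M q s) :
    LipschitzJoinedIn M p s := by
  obtain ⟨K, γ, hγ, hγM, hγ0, hγ1⟩ := hpq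
  obtain ⟨K', γ', hγ', hγM', hγ0', hγ1'⟩ := hqs
  have hdouble : LipschitzWith 2 fun t : ℝ ↦ 2 * t := .of_dist_le_mul fun x y ↦ by
    rw [Real.dist_eq, ← mul_sub, abs_mul]
    norm_num [Real.dist_eq]
  have hfirst : ∀ t ≤ 1 / 2, γ (2 * t) + (γ' (2 * t - 1) - q) = γ (2 * t) := fun t ht ↦ by
    rw [hγ0' _ (by linarith), sub_self, add_zero]
  have hsecond : ∀ t ≥ 1 / 2, γ (2 * t) + (γ' (2 * t - 1) - q) = γ' (2 * t - 1) := fun t ht ↦ by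
    rw [hγ1 _ (by linarith), add_sub_cancel]
  refine ⟨_, fun t ↦ γ (2 * t) + (γ' (2 * t - 1) - q), (hγ.comp hdouble).add
    ((hγ'.comp (hdouble.sub (.const 1))).sub (.const q)), fun t ↦ ?_, fun t ht ↦ ?_, fun t ht ↦ ?_⟩
  · rcases le_total t (1 / 2) with ht | ht
    · simpa only [hfirst t ht] using hγM _
    · simpa only [hsecond t ht] using hγM' _
  · exact (hfirst t (by linarith)).trans (hγ0 _ (by linarith))
  · exact (hsecond t (by linarith)).trans (hγ1' _ (by linarith))

/-- `IsSlide L M B r q H`: for `τ` running from `-1` to `1`, the maps `H τ : B → M` deform `r` into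
the constant `q`, in a jointly `L`-Lipschitz way. -/
structure IsSlide {X : Type*} [PseudoMetricSpace X] (L : ℝ) (M B : Set X) (r : X → X) (q : X)
    (H : ℝ → X → X) : Prop where
  mem : ∀ τ ∈ Icc (-1 : ℝ) 1, ∀ y ∈ B, H τ y ∈ M
  neg_one : ∀ y ∈ B, H (-1) y = r y
  one : ∀ y ∈ B, H 1 y = q
  dist_le : ∀ τ ∈ Icc (-1 : ℝ) 1, ∀ τ' ∈ Icc (-1 : ℝ) 1, ∀ y ∈ B, ∀ z ∈ B,
    dist (H τ y) (H τ' z) ≤ L * (|τ - τ'| + dist y z)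

theorem IsSlide.mono {X : Type*} [PseudoMetricSpace X] {L L' : ℝ} {M B : Set X} {r : X → X}
    {q : X} {H : ℝ → X → X} (h : IsSlide L M B r q H) (hL : L ≤ L') : IsSlide L' M B r q H :=
  { h with dist_le := fun τ hτ τ' hτ' y hy z hz ↦
      (h.dist_le τ hτ τ' hτ' y hy z hz).trans (by gcongr) }

variable {E : Type*} [NormedAddCommGroup E] [NormedSpace ℝ E] {M : Set E}

theorem lipschitzJoinedIn_of_segment_subset {r : E → E} {K : ℝ≥0} {s : Set E} (hrM : MapsTo r s M)
    (hrid : EqOn r id M) (hr : LipschitzOnWith K r s) {p q : E} (hp : p ∈ M) (hq : q ∈ M)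
    (hs : segment ℝ p q ⊆ s) : LipschitzJoinedIn M p q := by
  let c (t : ℝ) : E := AffineMap.lineMap p q (projIcc 0 1 zero_le_one t : ℝ)
  have hcs : ∀ t, c t ∈ s := fun t ↦ hs <|
    segment_eq_image_lineMap ℝ p q ▸ mem_image_of_mem _ (projIcc 0 1 zero_le_one t).2
  have hc : LipschitzWith (nndist p q * (1 * 1)) c := (lipschitzWith_lineMap p q).comp
    ((LipschitzWith.subtype_val _).comp (LipschitzWith.projIcc zero_le_one))
  refine ⟨_, r ∘ c, lipschitzOnWith_univ.1 (hr.comp hc.lipschitzOnWith fun t _ ↦ hcs t),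
    fun t ↦ hrM (hcs t), fun t ht ↦ ?_, fun t ht ↦ ?_⟩
  · simpa [c, projIcc_of_le_left _ ht] using hrid hp
  · simpa [c, projIcc_of_right_le _ ht] using hrid hq

theorem IsLipschitzNhdRetract.lipschitzJoinedIn (hM : IsLipschitzNhdRetract M)
    (hconn : IsPreconnected M) {p q : E} (hp : p ∈ M) (hq : q ∈ M) : LipschitzJoinedIn M p q := by
  obtain ⟨δ, hδ, K, r, hrM, hrid, hr⟩ := hM
  have hlocal : ∀ x ∈ M, ∀ y ∈ M, y ∈ Metric.ball x δ → LipschitzJoinedIn M x y :=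
    fun x hx y hy hxy ↦ lipschitzJoinedIn_of_segment_subset hrM hrid hr hx hy <|
      ((convex_ball x δ).segment_subset (Metric.mem_ball_self hδ) hxy).trans
        (Metric.ball_subset_thickening hx δ)
  refine hconn.induction₂' (LipschitzJoinedIn M) (fun x hx ↦ ?_)
    (fun x y z _ _ _ hxy hyz ↦ hxy.trans hyz) hp hq
  filter_upwards [mem_nhdsWithin_of_mem_nhds (Metric.ball_mem_nhds x hδ), self_mem_nhdsWithin]
    with y hy hyM
  exact ⟨hlocal x hx y hyM hy, hlocal y hyM x hx (Metric.mem_ball_comm.1 hy)⟩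

theorem dist_lineMap_lineMap_le {p y z : E} {a b δ : ℝ} (ha : a ∈ Icc (0 : ℝ) 1)
    (hz : dist z p ≤ δ) :
    dist (AffineMap.lineMap p y a) (AffineMap.lineMap p z b) ≤ dist y z + |a - b| * δ := by
  refine (dist_triangle _ (AffineMap.lineMap p z a) _).trans (add_le_add ?_ ?_)
  · rw [dist_eq_norm, AffineMap.lineMap_apply_module, AffineMap.lineMap_apply_module,
      add_sub_add_left_eq_sub, ← smul_sub, norm_smul, Real.norm_of_nonneg ha.1, dist_eq_norm]
    exact mul_le_of_le_one_left (norm_nonneg _) ha.2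
  · rw [dist_lineMap_lineMap, Real.dist_eq, dist_comm p z]
    gcongr

/-- Contract the ball to its centre `p`, projecting by `r`, and then follow a path from `p`
to `q`. -/
theorem exists_isSlide {r : E → E} {K : ℝ≥0} {δ : ℝ} (hδ : 0 ≤ δ)
    (hrM : MapsTo r (Metric.thickening δ M) M) (hrid : EqOn r id M)
    (hr : LipschitzOnWith K r (Metric.thickening δ M)) {p q : E} (hp : p ∈ M)
    (hpq : LipschitzJoinedIn M p q) : ∃ L H, IsSlide L M (Metric.ball p δ) r q H := by
  obtain ⟨K', γ, hγ, hγM, hγ0, hγ1⟩ := hpq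
  let c (τ : ℝ) (y : E) : E := AffineMap.lineMap p y (max 0 (-τ))
  have hmax : ∀ τ ∈ Icc (-1 : ℝ) 1, max 0 (-τ) ∈ Icc (0 : ℝ) 1 := fun τ hτ ↦
    ⟨le_max_left _ _, max_le zero_le_one (by linarith [hτ.1])⟩
  have hc : ∀ τ ∈ Icc (-1 : ℝ) 1, ∀ y ∈ Metric.ball p δ, c τ y ∈ Metric.thickening δ M := by
    intro τ hτ y hy
    refine Metric.ball_subset_thickening hp δ ?_
    rw [Metric.mem_ball, dist_lineMap_left, Real.norm_of_nonneg (hmax τ hτ).1, dist_comm p]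
    exact (mul_le_of_le_one_left dist_nonneg (hmax τ hτ).2).trans_lt hy
  refine ⟨K * (1 + δ) + K', fun τ y ↦ r (c τ y) + (γ τ - p), ⟨fun τ hτ y hy ↦ ?_, fun y _ ↦ ?_,
    fun y _ ↦ ?_, fun τ hτ τ' hτ' y hy z hz ↦ ?_⟩⟩
  · rcases le_total τ 0 with h | h
    · simpa [hγ0 τ h] using hrM (hc τ hτ y hy)
    · simpa [c, h, hrid hp] using hγM τ
  · simp [c, hγ0]
  · simp [c, hγ1, hrid hp]
  · have hτ_le : |max 0 (-τ) - max 0 (-τ')| ≤ |τ - τ'| := by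
      simpa only [max_comm (0 : ℝ), neg_sub_neg, abs_sub_comm τ'] using
        abs_max_sub_max_le_abs (-τ) (-τ') 0
    calc dist (r (c τ y) + (γ τ - p)) (r (c τ' z) + (γ τ' - p))
        ≤ K * dist (c τ y) (c τ' z) + K' * |τ - τ'| := by
          refine (dist_add_add_le _ _ _ _).trans (add_le_add ?_ ?_)
          · exact hr.dist_le_mul _ (hc τ hτ y hy) _ (hc τ' hτ' z hz)
          · rw [dist_sub_right]; exact hγ.dist_le_mul τ τ'
      _ ≤ K * (dist y z + |τ - τ'| * δ) + K' * |τ - τ'| := by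
          gcongr
          exact (dist_lineMap_lineMap_le (hmax τ hτ) (Metric.mem_ball.1 hz).le).trans (by gcongr)
      _ ≤ (K * (1 + δ) + K') * (|τ - τ'| + dist y z) := by
          have : 0 ≤ K * |τ - τ'| + K * δ * dist y z + K' * dist y z := by positivity
          linarith

end Retraction

section Gluing

/-- The ratio `a / s` truncated to `[-1, 1]`. -/
noncomputable def clampedRatio (a s : ℝ) : ℝ := max (-1) (min 1 (a / s))

theorem clampedRatio_mem_Icc (a s : ℝ) : clampedRatio a s ∈ Icc (-1 : ℝ) 1 :=
  ⟨le_max_left _ _, max_le (by norm_num) (min_le_left _ _)⟩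

theorem clampedRatio_eq_one {a s : ℝ} (hs : 0 < s) (h : s ≤ a) : clampedRatio a s = 1 := by
  rw [clampedRatio, min_eq_left ((one_le_div hs).2 h), max_eq_right (by norm_num)]

theorem clampedRatio_eq_neg_one {a s : ℝ} (hs : 0 < s) (h : a ≤ -s) :
    clampedRatio a s = -1 := by
  have : a / s ≤ -1 := by rwa [div_le_iff₀ hs, neg_one_mul]
  exact max_eq_left ((min_le_right _ _).trans this)

theorem mul_abs_clampedRatio_sub_le {a s a' s' e : ℝ} (hs : 0 < s) (hs' : 0 < s')
    (ha : |a - a'| ≤ e) (hss' : |s - s'| ≤ e) :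
    s * |clampedRatio a s - clampedRatio a' s'| ≤ 2 * e := by
  have hmul : ∀ {a s : ℝ}, 0 < s → s * clampedRatio a s = max (-s) (min s a) := fun {a s} hs ↦ by
    rw [clampedRatio, mul_max_of_nonneg _ _ hs.le, mul_min_of_nonneg _ _ hs.le, mul_neg, mul_one,
      mul_div_cancel₀ a hs.ne']
  have hmove : |s * clampedRatio a s - s' * clampedRatio a' s'| ≤ e := by
    rw [hmul hs, hmul hs']
    refine (abs_max_sub_max_le_max _ _ _ _).trans (max_le ?_ ?_)
    · rwa [neg_sub_neg, abs_sub_comm]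
    · exact (abs_min_sub_min_le_max _ _ _ _).trans (max_le hss' ha)
  have hsmall : |(s' - s) * clampedRatio a' s'| ≤ e := by
    rw [abs_mul, abs_sub_comm]
    exact (mul_le_of_le_one_right (abs_nonneg _)
      (abs_le.2 (clampedRatio_mem_Icc a' s'))).trans hss'
  calc s * |clampedRatio a s - clampedRatio a' s'|
      = |(s * clampedRatio a s - s' * clampedRatio a' s') + (s' - s) * clampedRatio a' s'| := by
        rw [← abs_of_pos hs, ← abs_mul, abs_of_pos hs]
        congr 1
        ring
    _ ≤ e + e := (abs_add_le _ _).trans (add_le_add hmove hsmall)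
    _ = 2 * e := (two_mul e).symm

theorem clampedRatio_saturated {a s a' s' e : ℝ} (hs : 2 * e < s) (ha : |a - a'| ≤ e)
    (hss' : |s - s'| ≤ e) (hsat : s ≤ |a|) (hsat' : s' ≤ |a'|) :
    ((0 < a ∧ clampedRatio a s = 1) ∧ 0 < a' ∧ clampedRatio a' s' = 1) ∨
      (a < 0 ∧ clampedRatio a s = -1) ∧ a' < 0 ∧ clampedRatio a' s' = -1 := by
  have he : 0 ≤ e := (abs_nonneg _).trans ha
  have ha := abs_le.1 ha
  have hss' := abs_le.1 hss'
  have hs_pos : 0 < s := by linarith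
  have hs'_pos : 0 < s' := by linarith
  rcases le_abs.1 hsat with h | h <;> rcases le_abs.1 hsat' with h' | h'
  · exact .inl ⟨⟨by linarith, clampedRatio_eq_one hs_pos h⟩,
      by linarith, clampedRatio_eq_one hs'_pos h'⟩
  · linarith
  · linarith
  · exact .inr ⟨⟨by linarith, clampedRatio_eq_neg_one hs_pos (by linarith)⟩,
      by linarith, clampedRatio_eq_neg_one hs'_pos (by linarith)⟩

theorem mul_dist_glue_le {X Y κ : Type*} [PseudoMetricSpace X] [PseudoMetricSpace Y]
    {cell : X → κ} {G : κ → ℝ → X → Y} {r : X → Y} {q : Y} {S σ : X → ℝ} {η L D : ℝ}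
    (hS : LipschitzWith 1 S) (hσ : LipschitzWith 1 σ) (hS0 : ∀ y, 0 ≤ S y) (hSη : ∀ y, S y ≤ η)
    (hL : 0 ≤ L) (hcell : ∀ y z, cell y ≠ cell z → dist y z < S y → S y ≤ |σ y|)
    (hG : ∀ y z, cell y = cell z → ∀ τ ∈ Icc (-1 : ℝ) 1, ∀ τ' ∈ Icc (-1 : ℝ) 1,
      dist (G (cell y) τ y) (G (cell z) τ' z) ≤ L * (|τ - τ'| + dist y z))
    (hneg : ∀ y, σ y < 0 → G (cell y) (-1) y = r y) (hpos : ∀ y, 0 < σ y → G (cell y) 1 y = q)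
    (hr : ∀ y z, σ y < 0 → σ z < 0 → dist (r y) (r z) ≤ L * dist y z)
    (hD : ∀ y z, ∀ τ ∈ Icc (-1 : ℝ) 1, ∀ τ' ∈ Icc (-1 : ℝ) 1,
      dist (G (cell y) τ y) (G (cell z) τ' z) ≤ D) (y z : X) :
    S y * dist (G (cell y) (clampedRatio (σ y) (S y)) y)
      (G (cell z) (clampedRatio (σ z) (S z)) z) ≤ (2 * D + L * (2 + η)) * dist y z := by
  have hSyz : |S y - S z| ≤ dist y z := by simpa [Real.dist_eq] using hS.dist_le_mul y z
  have hσyz : |σ y - σ z| ≤ dist y z := by simpa [Real.dist_eq] using hσ.dist_le_mul y z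
  have hτ := clampedRatio_mem_Icc
  have hD0 : 0 ≤ D := dist_nonneg.trans (hD y y _ (hτ 0 0) _ (hτ 0 0))
  have hη : 0 ≤ η := (hS0 y).trans (hSη y)
  have hdist : 0 ≤ dist y z := dist_nonneg
  rcases le_or_gt (S y) (2 * dist y z) with hfar | hnear
  · calc _ ≤ 2 * dist y z * D := mul_le_mul hfar (hD _ _ _ (hτ _ _) _ (hτ _ _)) dist_nonneg
          (by positivity)
      _ ≤ _ := by nlinarith [mul_nonneg (mul_nonneg hL (by positivity : 0 ≤ 2 + η)) hdist]
  refine le_trans ?_ (mul_le_mul_of_nonneg_right (le_add_of_nonneg_left (by positivity)) hdist)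
  have hSz : S y - S z ≤ dist y z := (abs_le.1 hSyz).2
  by_cases hyz : cell y = cell z
  · calc _ ≤ S y * (L * (|clampedRatio (σ y) (S y) - clampedRatio (σ z) (S z)| + dist y z)) :=
          mul_le_mul_of_nonneg_left (hG y z hyz _ (hτ _ _) _ (hτ _ _)) (hS0 y)
      _ = L * (S y * |clampedRatio (σ y) (S y) - clampedRatio (σ z) (S z)| + S y * dist y z) := by
          ring
      _ ≤ L * (2 * dist y z + η * dist y z) :=
          mul_le_mul_of_nonneg_left (add_le_add (mul_abs_clampedRatio_sub_le (by linarith)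
            (by linarith) hσyz hSyz) (mul_le_mul_of_nonneg_right (hSη y) hdist)) hL
      _ = L * (2 + η) * dist y z := by ring
  rcases clampedRatio_saturated hnear hσyz hSyz (hcell y z hyz (by linarith))
    (hcell z y (Ne.symm hyz) (by rw [dist_comm]; linarith)) with
    ⟨⟨hy, hy1⟩, hz, hz1⟩ | ⟨⟨hy, hy1⟩, hz, hz1⟩
  · rw [hy1, hz1, hpos y hy, hpos z hz, dist_self, mul_zero]
    positivity
  · rw [hy1, hz1, hneg y hy, hneg z hz]
    calc S y * dist (r y) (r z) ≤ η * (L * dist y z) :=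
          mul_le_mul (hSη y) (hr y z hy hz) dist_nonneg hη
      _ ≤ L * (2 + η) * dist y z := by linarith [mul_nonneg hL hdist]

end Gluing

section SingularProjection

variable {X : Type*} [PseudoMetricSpace X] {M : Set X} {t : Finset X} {η c : ℝ} {q : ℝ × ℝ} {y : X}

/-- For `q = (s, b)`, a distance, truncated at `η`, from `y` to the set on which the level set
`{infDist · M = s}` meets one of the spheres `{dist · p = b}`, `p ∈ t`. -/
noncomputable def netGap (M : Set X) (t : Finset X) (η : ℝ) (q : ℝ × ℝ) (y : X) : ℝ :=
  t.fold min η fun p ↦ dist (Metric.infDist y M, dist y p) q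

theorem le_netGap_iff :
    c ≤ netGap M t η q y ↔ c ≤ η ∧ ∀ p ∈ t, c ≤ dist (Metric.infDist y M, dist y p) q :=
  Finset.le_fold_min c

theorem lt_netGap_iff :
    c < netGap M t η q y ↔ c < η ∧ ∀ p ∈ t, c < dist (Metric.infDist y M, dist y p) q :=
  Finset.lt_fold_min c

theorem netGap_le : netGap M t η q y ≤ η := (le_netGap_iff.1 le_rfl).1

theorem netGap_le_dist {p : X} (hp : p ∈ t) :
    netGap M t η q y ≤ dist (Metric.infDist y M, dist y p) q := (le_netGap_iff.1 le_rfl).2 p hp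

theorem netGap_nonneg (hη : 0 ≤ η) : 0 ≤ netGap M t η q y :=
  le_netGap_iff.2 ⟨hη, fun _ _ ↦ dist_nonneg⟩

theorem lipschitzWith_netGap : LipschitzWith 1 (netGap M t η q) := by
  refine .of_le_add fun y z ↦ sub_le_iff_le_add.1 (le_netGap_iff.2 ⟨?_, fun p hp ↦ ?_⟩)
  · exact (sub_le_self _ dist_nonneg).trans netGap_le
  · have hyz : dist (Metric.infDist y M, dist y p) (Metric.infDist z M, dist z p) ≤ dist y z :=
      max_le (by simpa using (Metric.lipschitz_infDist_pt M).dist_le_mul y z)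
        (dist_dist_dist_le_left y z p)
    linarith [netGap_le_dist (M := M) (η := η) (q := q) (y := y) hp, dist_triangle
      (Metric.infDist y M, dist y p) (Metric.infDist z M, dist z p) q]

theorem continuous_netGap : Continuous fun x : (ℝ × ℝ) × X ↦ netGap M t η x.1 x.2 := by
  classical
  induction t using Finset.induction_on with
  | empty => exact continuous_const
  | insert p t hp ih =>
    simp only [netGap, Finset.fold_insert hp]
    exact ((((Metric.continuous_infDist_pt M).comp continuous_snd).prodMk
      (continuous_snd.dist continuous_const)).dist continuous_fst).min ih

theorem netGap_le_abs_infDist_sub {s b : ℝ} {z : X}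
    (hyz : {p ∈ t | dist y p < b} ≠ {p ∈ t | dist z p < b})
    (hlt : dist y z < netGap M t η (s, b) y) :
    netGap M t η (s, b) y ≤ |Metric.infDist y M - s| := by
  obtain ⟨p, hp, hpb⟩ : ∃ p ∈ t, ¬(dist y p < b ↔ dist z p < b) := by
    by_contra! h
    exact hyz (Finset.filter_congr h)
  have hyp : |dist y p - b| ≤ dist y z := by
    have h1 := dist_triangle y z p
    have h2 := dist_triangle_left z p y
    rcases lt_or_ge (dist y p) b with h | h
    · have : b ≤ dist z p := by simpa [h] using hpb
      exact abs_le.2 ⟨by linarith, by linarith [dist_nonneg (x := y) (y := z)]⟩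
    · have : dist z p < b := by simpa [h.not_gt] using hpb
      exact abs_le.2 ⟨by linarith [dist_nonneg (x := y) (y := z)], by linarith⟩
  refine ((le_max_iff.1 (netGap_le_dist (M := M) (η := η) (q := (s, b)) (y := y) hp)).resolve_right
    fun h ↦ ?_).trans_eq (Real.dist_eq _ _)
  exact (hyp.trans_lt hlt).not_ge (h.trans_eq (Real.dist_eq _ _))

theorem filter_dist_lt_nonempty {ρ b : ℝ} (hne : M.Nonempty) (ht : ∀ m ∈ M, ∃ p ∈ t, dist m p < ρ)
    (hb : 3 * ρ ≤ b) (hy : Metric.infDist y M < 2 * ρ) : {p ∈ t | dist y p < b}.Nonempty := by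
  obtain ⟨m, hm, hym⟩ := (Metric.infDist_lt_iff hne).1 hy
  obtain ⟨p, hp, hmp⟩ := ht m hm
  exact ⟨p, Finset.mem_filter.2 ⟨hp, by linarith [dist_triangle y m p]⟩⟩

open scoped Classical in
theorem exists_glue_of_isSlide {t : Finset X} {b δ L : ℝ} {q₀ : X} {r : X → X}
    {H : X → ℝ → X → X} (hb : b ≤ δ) (hL : 0 ≤ L) (hq₀ : q₀ ∈ M)
    (hH : ∀ p ∈ t, IsSlide L M (Metric.ball p δ) r q₀ (H p)) :
    let cell (y : X) : Finset X := {p ∈ t | dist y p < b}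
    ∃ G : Finset X → ℝ → X → X, (∀ y, ∀ τ ∈ Icc (-1 : ℝ) 1, G (cell y) τ y ∈ M) ∧
      (∀ y, (cell y).Nonempty → G (cell y) (-1) y = r y) ∧ (∀ y, G (cell y) 1 y = q₀) ∧
      ∀ y z, cell y = cell z → ∀ τ ∈ Icc (-1 : ℝ) 1, ∀ τ' ∈ Icc (-1 : ℝ) 1,
        dist (G (cell y) τ y) (G (cell z) τ' z) ≤ L * (|τ - τ'| + dist y z) := by
  intro cell
  have hslide : ∀ y, ∀ h : (cell y).Nonempty,
      IsSlide L M (Metric.ball h.choose δ) r q₀ (H h.choose) ∧ y ∈ Metric.ball h.choose δ :=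
    fun y h ↦ have h' := Finset.mem_filter.1 h.choose_spec
      ⟨hH _ h'.1, h'.2.trans_le hb⟩
  refine ⟨fun A τ y ↦ if h : A.Nonempty then H h.choose τ y else q₀, fun y τ hτ ↦ ?_,
    fun y h ↦ ?_, fun y ↦ ?_, fun y z hyz τ hτ τ' hτ' ↦ ?_⟩
  · by_cases h : (cell y).Nonempty
    · simpa only [h, ↓reduceDIte] using (hslide y h).1.mem τ hτ y (hslide y h).2
    · simpa only [h, ↓reduceDIte] using hq₀
  · simpa only [h, ↓reduceDIte] using (hslide y h).1.neg_one y (hslide y h).2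
  · by_cases h : (cell y).Nonempty
    · simpa only [h, ↓reduceDIte] using (hslide y h).1.one y (hslide y h).2
    · simp only [h, ↓reduceDIte]
  · by_cases h : (cell z).Nonempty
    · simpa only [hyz, h, ↓reduceDIte] using (hslide z h).1.dist_le τ hτ τ' hτ' y
        (by simpa only [hyz] using (hslide y (hyz ▸ h)).2) z (hslide z h).2
    · simp only [hyz, h, ↓reduceDIte, dist_self]
      positivity

theorem exists_singular_projection_of_isSlide (hbdd : Bornology.IsBounded M) {t : Finset X}
    {ρ L : ℝ} {q₀ : X} {r : X → X} {H : X → ℝ → X → X} (hρ : 0 < ρ) (hL : 0 ≤ L) (hq₀ : q₀ ∈ M)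
    (ht : ∀ m ∈ M, ∃ p ∈ t, dist m p < ρ) (hrid : EqOn r id M)
    (hr : ∀ y ∈ Metric.thickening (4 * ρ) M, ∀ z ∈ Metric.thickening (4 * ρ) M,
      dist (r y) (r z) ≤ L * dist y z)
    (hH : ∀ p ∈ t, IsSlide L M (Metric.ball p (4 * ρ)) r q₀ (H p))
    {q : ℝ × ℝ} (hq : q ∈ Icc ρ (2 * ρ) ×ˢ Icc (3 * ρ) (4 * ρ)) :
    ∃ Φ : X → X, (∀ y, Φ y ∈ M) ∧ EqOn Φ id M ∧ ∀ y z,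
      netGap M t ρ q y * dist (Φ y) (Φ z) ≤ (2 * Metric.diam M + L * (2 + ρ)) * dist y z := by
  classical
  obtain ⟨s, b⟩ := q
  obtain ⟨⟨hρs : ρ ≤ s, hs : s ≤ 2 * ρ⟩, hb : 3 * ρ ≤ b, hb' : b ≤ 4 * ρ⟩ := hq
  have hne : M.Nonempty := ⟨q₀, hq₀⟩
  let σ (y : X) : ℝ := Metric.infDist y M - s
  obtain ⟨G, hG_mem, hG_neg_one, hG_one, hG_dist⟩ := exists_glue_of_isSlide hb' hL hq₀ hH
  have hσ : LipschitzWith 1 σ :=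
    .of_dist_le_mul fun y z ↦ by
      simpa only [σ, dist_sub_right] using (Metric.lipschitz_infDist_pt M).dist_le_mul y z
  have hthick : ∀ y, σ y < 0 → y ∈ Metric.thickening (4 * ρ) M := fun y hy ↦
    (Metric.mem_thickening_iff_infDist_lt hne).2 (by linarith)
  have hG_neg : ∀ y, σ y < 0 → G {p ∈ t | dist y p < b} (-1) y = r y := fun y hy ↦
    hG_neg_one y (filter_dist_lt_nonempty hne ht hb (by linarith))
  refine ⟨fun y ↦ G {p ∈ t | dist y p < b} (clampedRatio (σ y) (netGap M t ρ (s, b) y)) y,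
    fun y ↦ hG_mem y _ (clampedRatio_mem_Icc _ _), fun y hy ↦ ?_,
    mul_dist_glue_le lipschitzWith_netGap hσ
      (fun y ↦ netGap_nonneg hρ.le) (fun y ↦ netGap_le) hL
      (fun y z ↦ netGap_le_abs_infDist_sub) hG_dist hG_neg (fun y _ ↦ hG_one y)
      (fun y z hy hz ↦ hr y (hthick y hy) z (hthick z hz))
      fun y z τ hτ τ' hτ' ↦ Metric.dist_le_diam_of_mem hbdd (hG_mem y τ hτ) (hG_mem z τ' hτ')⟩
  have hσy : σ y = -s := by simp only [σ, Metric.infDist_zero_of_mem hy, zero_sub]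
  have hgap : 0 < netGap M t ρ (s, b) y := lt_netGap_iff.2 ⟨hρ, fun p _ ↦ lt_max_of_lt_left <| by
    rw [Metric.infDist_zero_of_mem hy, dist_zero_left, Real.norm_eq_abs]
    exact abs_pos.2 (by linarith)⟩
  have hle : netGap M t ρ (s, b) y ≤ s := netGap_le.trans hρs
  simpa only [clampedRatio_eq_neg_one hgap (hσy.trans_le (neg_le_neg hle)),
    hG_neg y (by linarith)] using hrid hy

variable {E : Type*} [NormedAddCommGroup E] [NormedSpace ℝ E] {M : Set E}

theorem IsLipschitzNhdRetract.exists_singular_projection (hM : IsLipschitzNhdRetract M)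
    (hcpt : IsCompact M) (hconn : IsConnected M) : ∃ ρ > 0, ∃ (t : Finset E) (C : ℝ),
      ∀ q ∈ Icc ρ (2 * ρ) ×ˢ Icc (3 * ρ) (4 * ρ), ∃ Φ : E → E, (∀ y, Φ y ∈ M) ∧ EqOn Φ id M ∧
        ∀ y z, netGap M t ρ q y * dist (Φ y) (Φ z) ≤ C * dist y z := by
  obtain ⟨q₀, hq₀⟩ := hconn.nonempty
  have hjoin : ∀ p ∈ M, LipschitzJoinedIn M p q₀ := fun p hp ↦
    hM.lipschitzJoinedIn hconn.isPreconnected hp hq₀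
  obtain ⟨δ, hδ, K, r, hrM, hrid, hr⟩ := hM
  have hρ : 0 < δ / 4 := by positivity
  have hδρ : 4 * (δ / 4) = δ := by ring
  obtain ⟨t, htM, ht⟩ := hcpt.elim_nhds_subcover (Metric.ball · (δ / 4))
    fun x _ ↦ Metric.ball_mem_nhds x hρ
  choose! L H hH using fun p hp ↦ exists_isSlide hδ.le hrM hrid hr hp (hjoin p hp)
  obtain ⟨L', hL'⟩ := (t.finite_toSet.image L).bddAbove
  have hLL' : ∀ p ∈ t, L p ≤ max L' K := fun p hp ↦
    (hL' (mem_image_of_mem L hp)).trans (le_max_left _ _)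
  have hL0 : 0 ≤ max L' K := K.2.trans (le_max_right _ _)
  refine ⟨δ / 4, hρ, t, 2 * Metric.diam M + max L' K * (2 + δ / 4),
    fun q hq ↦ exists_singular_projection_of_isSlide (H := H) hcpt.isBounded hρ hL0 hq₀
      (fun m hm ↦ ?_) hrid (fun y hy z hz ↦ ?_) (fun p hp ↦ ?_) hq⟩
  · simpa using ht hm
  · rw [hδρ] at hy hz
    exact (hr.dist_le_mul y hy z hz).trans (by gcongr; exact le_max_right _ _)
  · rw [hδρ]
    exact (hH p (htM p hp)).mono (hLL' p hp)

end SingularProjection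

section Averaging

theorem setLIntegral_enorm_inv_lt_top {E : Type*} [NormedAddCommGroup E] [NormedSpace ℝ E]
    [FiniteDimensional ℝ E] [MeasurableSpace E] [BorelSpace E] (μ : Measure E)
    [μ.IsAddHaarMeasure] (hE : 1 < Module.finrank ℝ E) :
    ∫⁻ u in Metric.ball 0 1, ‖u‖ₑ⁻¹ ∂μ < ⊤ := by
  have : Nontrivial E := Module.nontrivial_of_finrank_pos (R := ℝ) (zero_lt_one.trans hE)
  have hint : IntegrableOn (fun u : E ↦ ‖u‖⁻¹) (Metric.ball 0 1) μ := by
    refine (integrableOn_fun_norm_addHaar μ (f := fun y ↦ y⁻¹)).2 ?_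
    refine ((continuous_pow (Module.finrank ℝ E - 2)).integrableOn_Ioc (a := 0) (b := 1)).mono_set
      Ioo_subset_Ioc_self |>.congr_fun (fun y hy ↦ ?_) measurableSet_Ioo
    obtain ⟨k, hk⟩ := Nat.exists_eq_add_of_lt hE
    rw [hk, show 1 + k + 1 - 2 = k by lia, show 1 + k + 1 - 1 = k + 1 by lia, smul_eq_mul,
      pow_succ, mul_inv_cancel_right₀ hy.1.ne']
  refine (lintegral_congr_ae (ae_restrict_of_ae ?_)).trans_lt hint.2
  filter_upwards [Measure.ae_ne μ (0 : E)] with u hu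
  rw [enorm_inv (norm_ne_zero_iff.2 hu), enorm_norm]

theorem exists_setLIntegral_edist_inv_le {E : Type*} [NormedAddCommGroup E] [NormedSpace ℝ E]
    [FiniteDimensional ℝ E] [MeasurableSpace E] [BorelSpace E] (μ : Measure E)
    [μ.IsAddHaarMeasure] (hE : 1 < Module.finrank ℝ E) {B : Set E} (hB : μ B ≠ ⊤) :
    ∃ A ≠ ⊤, ∀ a : E, ∫⁻ q in B, (edist a q)⁻¹ ∂μ ≤ A := by
  refine ⟨∫⁻ u in Metric.ball 0 1, ‖u‖ₑ⁻¹ ∂μ + μ B,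
    ENNReal.add_ne_top.2 ⟨(setLIntegral_enorm_inv_lt_top μ hE).ne, hB⟩, fun a ↦ ?_⟩
  have hpt : ∀ u : E, ‖u‖ₑ⁻¹ ≤ (Metric.ball 0 1).indicator (fun u ↦ ‖u‖ₑ⁻¹) u + 1 := fun u ↦ by
    by_cases hu : u ∈ Metric.ball 0 1
    · rw [indicator_of_mem hu]; exact le_self_add
    · rw [indicator_of_notMem hu, zero_add, ENNReal.inv_le_one]
      simpa [enorm_eq_nnnorm, ← NNReal.coe_le_coe] using hu
  calc ∫⁻ q in B, (edist a q)⁻¹ ∂μ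
      ≤ ∫⁻ q in B, ((Metric.ball 0 1).indicator (fun u ↦ ‖u‖ₑ⁻¹) (a - q) + 1) ∂μ :=
        lintegral_mono fun q ↦ by rw [edist_eq_enorm_sub]; exact hpt _
    _ = ∫⁻ q in B, (Metric.ball 0 1).indicator (fun u ↦ ‖u‖ₑ⁻¹) (a - q) ∂μ + μ B := by
        rw [lintegral_add_right _ measurable_const, lintegral_one, Measure.restrict_apply_univ]
    _ ≤ ∫⁻ q, (Metric.ball 0 1).indicator (fun u ↦ ‖u‖ₑ⁻¹) (a - q) ∂μ + μ B := by
        gcongr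
        exact Measure.restrict_le_self
    _ = ∫⁻ u in Metric.ball 0 1, ‖u‖ₑ⁻¹ ∂μ + μ B := by
        rw [lintegral_sub_left_eq_self (fun u ↦ (Metric.ball 0 1).indicator (fun u ↦ ‖u‖ₑ⁻¹) u) a,
          lintegral_indicator Metric.isOpen_ball.measurableSet]

theorem exists_setLIntegral_netGap_inv_le {X : Type*} [PseudoMetricSpace X] (M : Set X)
    (t : Finset X) {η : ℝ} (hη : 0 < η) {B : Set (ℝ × ℝ)} (hB : volume B ≠ ⊤) :
    ∃ A ≠ ⊤, ∀ y, ∫⁻ q in B, (ENNReal.ofReal (netGap M t η q y))⁻¹ ≤ A := by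
  obtain ⟨A, hA, hAB⟩ := exists_setLIntegral_edist_inv_le (volume : Measure (ℝ × ℝ)) (by simp) hB
  refine ⟨(ENNReal.ofReal η)⁻¹ * volume B + ∑ _p ∈ t, A, ?_, fun y ↦ ?_⟩
  · exact ENNReal.add_ne_top.2 ⟨ENNReal.mul_ne_top (by simpa using hη) hB,
      ENNReal.sum_ne_top.2 fun _ _ ↦ hA⟩
  have hpt : ∀ q : ℝ × ℝ, (ENNReal.ofReal (netGap M t η q y))⁻¹ ≤
      (ENNReal.ofReal η)⁻¹ + ∑ p ∈ t, (edist (Metric.infDist y M, dist y p) q)⁻¹ := fun q ↦ by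
    rcases (Finset.fold_min_le _).1 (le_refl (netGap M t η q y)) with h | ⟨p, hp, h⟩
    · exact (ENNReal.inv_le_inv.2 (ENNReal.ofReal_le_ofReal h)).trans le_self_add
    · calc (ENNReal.ofReal (netGap M t η q y))⁻¹
          ≤ (edist (Metric.infDist y M, dist y p) q)⁻¹ := by
            rw [edist_dist]
            exact ENNReal.inv_le_inv.2 (ENNReal.ofReal_le_ofReal h)
        _ ≤ ∑ p ∈ t, (edist (Metric.infDist y M, dist y p) q)⁻¹ :=
            Finset.single_le_sum
              (f := fun p ↦ (edist (Metric.infDist y M, dist y p) q)⁻¹) (fun _ _ ↦ zero_le) hp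
        _ ≤ _ := le_add_self
  refine (lintegral_mono hpt).trans ?_
  rw [lintegral_add_left measurable_const, setLIntegral_const,
    lintegral_finsetSum _ fun p _ ↦ by fun_prop]
  gcongr
  exact hAB _

theorem exists_ae_lt_top_and_lintegral_mul_le {Q X : Type*} [MeasurableSpace Q]
    [MeasurableSpace X] {ν : Measure Q} [IsFiniteMeasure ν] (hν : ν ≠ 0) {μ : Measure X}
    [IsFiniteMeasure μ] {F : Q → X → ℝ≥0∞} (hF : AEMeasurable (Function.uncurry F) (ν.prod μ))
    {g : X → ℝ≥0∞} (hg : AEMeasurable g μ) {A : ℝ≥0∞} (hA : A ≠ ⊤)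
    (hFA : ∀ x, ∫⁻ q, F q x ∂ν ≤ A) {P : Q → Prop} (hP : ∀ᵐ q ∂ν, P q) :
    ∃ q, P q ∧ (∀ᵐ x ∂μ, F q x < ⊤) ∧
      ∫⁻ x, g x * F q x ∂μ ≤ A / ν univ * ∫⁻ x, g x ∂μ := by
  have hFle : ∫⁻ q, ∫⁻ x, F q x ∂μ ∂ν ≤ A * μ univ := by
    rw [lintegral_lintegral_swap hF, ← lintegral_const]
    exact lintegral_mono hFA
  have hFfin : ∀ᵐ q ∂ν, ∀ᵐ x ∂μ, F q x < ⊤ := by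
    filter_upwards [ae_lt_top' hF.lintegral_prod_right'
      (hFle.trans_lt (ENNReal.mul_lt_top hA.lt_top (measure_lt_top μ univ))).ne,
      hF.aestronglyMeasurable.prodMk_left] with q hq hFq
    exact ae_lt_top' hFq.aemeasurable hq.ne
  have hgF : AEMeasurable (Function.uncurry fun q x ↦ g x * F q x) (ν.prod μ) := hg.comp_snd.mul hF
  have hgFle : ∫⁻ q, ∫⁻ x, g x * F q x ∂μ ∂ν ≤ A * ∫⁻ x, g x ∂μ := by
    rw [lintegral_lintegral_swap hgF, ← lintegral_const_mul'' _ hg]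
    refine lintegral_mono_ae ?_
    filter_upwards [hF.aestronglyMeasurable.prodMk_right] with x hx
    have hFx : AEMeasurable (fun q ↦ F q x) ν := hx.aemeasurable
    rw [lintegral_const_mul'' _ hFx, mul_comm]
    gcongr
    exact hFA x
  obtain ⟨q, hq, hqle⟩ :=
    exists_notMem_null_le_laverage hν hgF.lintegral_prod_right' (ae_iff.1 (hP.and hFfin))
  obtain ⟨hPq, hFq⟩ := not_not.1 hq
  refine ⟨q, hPq, hFq, hqle.trans ?_⟩
  rw [laverage_eq, ← ENNReal.mul_div_right_comm]
  exact ENNReal.div_le_div_right hgFle _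

theorem exists_netGap_pos_and_lintegral_le {X : Type*} [PseudoMetricSpace X] [MeasurableSpace X]
    [BorelSpace X] [SecondCountableTopology X] (M : Set X)
    (t : Finset X) {η : ℝ} (hη : 0 < η) {B : Set (ℝ × ℝ)} (hBm : MeasurableSet B)
    (hB0 : volume B ≠ 0) (hB : volume B ≠ ⊤) :
    ∃ A : ℝ≥0, ∀ {Y : Type*} [MeasurableSpace Y] {μ : Measure Y} [IsFiniteMeasure μ] {v : Y → X}
      {g : Y → ℝ≥0∞}, AEMeasurable v μ → AEMeasurable g μ →
      ∃ q ∈ B, (∀ᵐ x ∂μ, 0 < netGap M t η q (v x)) ∧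
        ∫⁻ x, g x / ENNReal.ofReal (netGap M t η q (v x)) ∂μ ≤ A * ∫⁻ x, g x ∂μ := by
  obtain ⟨A, hA, hAB⟩ := exists_setLIntegral_netGap_inv_le M t hη hB
  have : Fact (volume B < ⊤) := ⟨hB.lt_top⟩
  refine ⟨(A / volume B).toNNReal, fun {Y _ μ _ v g} hv hg ↦ ?_⟩
  have hF : AEMeasurable (Function.uncurry fun (q : ℝ × ℝ) (x : Y) ↦
      (ENNReal.ofReal (netGap M t η q (v x)))⁻¹) ((volume.restrict B).prod μ) :=
    (continuous_netGap.measurable.comp_aemeasurable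
      (measurable_fst.aemeasurable.prodMk hv.comp_snd)).ennreal_ofReal.inv
  obtain ⟨q, hqB, hqpos, hq⟩ := exists_ae_lt_top_and_lintegral_mul_le
    (by simpa using hB0) hF hg hA (fun x ↦ hAB (v x)) (ae_restrict_mem hBm)
  refine ⟨q, hqB, ?_, ?_⟩
  · simpa only [ENNReal.inv_lt_top, ENNReal.ofReal_pos] using hqpos
  · rw [ENNReal.coe_toNNReal (ENNReal.div_ne_top hA hB0)]
    simpa only [div_eq_mul_inv, Measure.restrict_apply_univ] using hq

end Averaging

theorem tendsto_ofReal_inv_mul_setLIntegral_Ioc {ω : ℝ → ℝ≥0∞} (hω : Tendsto ω (𝓝 0) (𝓝 0)) :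
    Tendsto (fun t ↦ ENNReal.ofReal t⁻¹ * ∫⁻ s in Ioc 0 t, ω s) (𝓝[>] 0) (𝓝 0) := by
  refine ENNReal.tendsto_nhds_zero.2 fun ε hε ↦ ?_
  have hIcc : Tendsto (fun t : ℝ ↦ Icc 0 t) (𝓝[>] 0) (𝓝 0).smallSets :=
    (tendsto_const_nhds.Icc tendsto_id).mono_left nhdsWithin_le_nhds
  filter_upwards [hIcc.eventually (hω.eventually_le_const hε).smallSets, self_mem_nhdsWithin]
    with t hle ht
  calc ENNReal.ofReal t⁻¹ * ∫⁻ s in Ioc 0 t, ω s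
      ≤ ENNReal.ofReal t⁻¹ * ∫⁻ _ in Ioc 0 t, ε := by
        gcongr 1
        exact setLIntegral_mono measurable_const fun s hs ↦ hle s (Ioc_subset_Icc_self hs)
    _ = ε := by
        rw [setLIntegral_const, Real.volume_Ioc, sub_zero, mul_left_comm,
          ← ENNReal.ofReal_mul (inv_nonneg.2 (mem_Ioi.1 ht).le), inv_mul_cancel₀ (ne_of_gt ht),
          ENNReal.ofReal_one, mul_one]

section Translation

variable {E F : Type*} [NormedAddCommGroup E] [NormedSpace ℝ E]

theorem exists_isOpen_eventually_add_smul_mem {K Ω : Set E} (hK : IsCompact K)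
    (hΩ : IsOpen Ω) (hKΩ : K ⊆ Ω) (e : E) :
    ∃ U, IsOpen U ∧ K ⊆ U ∧ ∀ᶠ t : ℝ in 𝓝 0, ∀ s ∈ Icc 0 t, ∀ x ∈ U, x + s • e ∈ Ω := by
  obtain ⟨V, U, hV, hU, h0V, hKU, hVU⟩ := generalized_tube_lemma
    (isCompact_singleton (x := (0 : ℝ))) hK
    (hΩ.preimage (f := fun p : ℝ × E ↦ p.2 + p.1 • e) (by fun_prop))
    (by rintro ⟨s, x⟩ ⟨rfl, hx⟩; simpa using hKΩ hx)
  have hIcc : Tendsto (fun t : ℝ ↦ Icc 0 t) (𝓝 0) (𝓝 0).smallSets :=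
    tendsto_const_nhds.Icc tendsto_id
  refine ⟨U, hU, hKU, ?_⟩
  filter_upwards [hIcc.eventually (hV.eventually_mem (h0V rfl)).smallSets] with t ht s hs x hx
  exact hVU (mk_mem_prod (ht s hs) hx)

variable [FiniteDimensional ℝ E] [MeasurableSpace E] [BorelSpace E] [NormedAddCommGroup F]
  {μ : Measure E} [μ.IsAddHaarMeasure]

theorem tendsto_lintegral_enorm_comp_add_smul_sub {f : E → F} (hf : Integrable f μ) (e : E) :
    Tendsto (fun s : ℝ ↦ ∫⁻ x, ‖f (x + s • e) - f x‖ₑ ∂μ) (𝓝 0) (𝓝 0) := by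
  let c : C(ℝ × E, E) := ⟨fun q ↦ q.2 + q.1 • e, by fun_prop⟩
  have hc : ∀ s, MeasurePreserving (c.curry s) μ μ := fun s ↦
    measurePreserving_add_right μ (s • e)
  have hlim := (tendsto_const_nhds (x := hf.toL1 f) (f := 𝓝 (0 : ℝ))).compMeasurePreservingLp
    (c.curry.continuous.tendsto 0) hc (hc 0) ENNReal.one_ne_top
  rw [Lp.tendsto_Lp_iff_tendsto_eLpNorm'] at hlim
  refine hlim.congr fun s ↦ ?_
  rw [eLpNorm_one_eq_lintegral_enorm]
  have hcomp : ∀ s, Lp.compMeasurePreserving (c.curry s) (hc s) (hf.toL1 f) =ᵐ[μ]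
      fun x ↦ f (x + s • e) := fun s ↦
    (Lp.coeFn_compMeasurePreserving _ (hc s)).trans
      ((hc s).quasiMeasurePreserving.ae_eq_comp hf.coeFn_toL1)
  refine lintegral_congr_ae ?_
  filter_upwards [hcomp s, hcomp 0] with x hs h0
  rw [Pi.sub_apply, hs, h0, zero_smul, add_zero]

theorem integrable_prod_comp_add_smul {f : E → F} (hf : Integrable f μ) (e : E) (ν : Measure ℝ)
    [IsFiniteMeasure ν] : Integrable (fun p : E × ℝ ↦ f (p.1 + p.2 • e)) (μ.prod ν) := by
  have hmp : MeasurePreserving (fun p : ℝ × E ↦ (p.1, p.2 + p.1 • e)) (ν.prod μ) (ν.prod μ) :=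
    (MeasurePreserving.id ν).skew_product (g := fun s x ↦ x + s • e) (by fun_prop)
      (.of_forall fun s ↦ (measurePreserving_add_right μ (s • e)).map_eq)
  exact (hmp.integrable_comp_of_integrable (hf.comp_snd ν)).swap

end Translation

section WeakDerivative

open scoped Distributions LineDeriv
open TopologicalSpace (Opens)

variable {E F : Type*} [NormedAddCommGroup E] [NormedSpace ℝ E] [NormedAddCommGroup F]
  [NormedSpace ℝ F] {Ω : Opens E} {u u' v v' : E → F} {e : E}

theorem lineDerivOp_testFunction_apply (φ : 𝓓(Ω, ℝ)) (e x : E) :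
    (∂_{e} φ) x = fderiv ℝ φ x e := by
  rw [TestFunction.lineDerivOp_eq_lineDerivCLM ℝ,
    TestFunction.lineDerivCLM_apply_of_le (by simp),
    (φ.contDiff.differentiable (by simp) x).lineDeriv_eq_fderiv]

theorem testFunction_apply_eq_zero (φ : 𝓓(Ω, ℝ)) {x : E} (hx : x ∉ Ω) : φ x = 0 :=
  image_eq_zero_of_notMem_tsupport fun h ↦ hx (φ.tsupport_subset h)

variable [MeasurableSpace E] {μ : Measure E}

theorem setIntegral_testFunction_smul (φ : 𝓓(Ω, ℝ)) (u : E → F) :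
    ∫ x in Ω, φ x • u x ∂μ = ∫ x, φ x • u x ∂μ :=
  setIntegral_eq_integral_of_forall_compl_eq_zero fun x hx ↦ by
    rw [testFunction_apply_eq_zero φ hx, zero_smul]

theorem integral_testFunction_smul_congr (h : u =ᵐ[μ.restrict Ω] v) (φ : 𝓓(Ω, ℝ)) :
    ∫ x, φ x • u x ∂μ = ∫ x, φ x • v x ∂μ := by
  rw [← setIntegral_testFunction_smul φ u, ← setIntegral_testFunction_smul φ v]
  exact integral_congr_ae (h.mono fun x hx ↦ congr_arg (φ x • ·) hx)

/-- `u'` is the weak (distributional) derivative of `u` in the direction `e` on the open set `Ω`.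
The integrals run over the whole space because test functions vanish off `Ω`. -/
def HasWeakLineDerivOn (μ : Measure E) (u u' : E → F) (Ω : Opens E) (e : E) : Prop :=
  ∀ φ : 𝓓(Ω, ℝ), ∫ x, (∂_{e} φ) x • u x ∂μ = -∫ x, φ x • u' x ∂μ

namespace HasWeakLineDerivOn

theorem congr_ae (h : HasWeakLineDerivOn μ u u' Ω e) (hu : u =ᵐ[μ.restrict Ω] v)
    (hu' : u' =ᵐ[μ.restrict Ω] v') : HasWeakLineDerivOn μ v v' Ω e := fun φ ↦ by
  rw [← integral_testFunction_smul_congr hu, ← integral_testFunction_smul_congr hu', h φ]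

theorem integral_fderiv_smul (h : HasWeakLineDerivOn μ u u' Ω e) {ψ : E → ℝ}
    (hψ : ContDiff ℝ (⊤ : ℕ∞) ψ) (hψc : HasCompactSupport ψ) (hψΩ : tsupport ψ ⊆ Ω) :
    ∫ x, fderiv ℝ ψ x e • u x ∂μ = -∫ x, ψ x • u' x ∂μ := by
  have := h ⟨ψ, hψ, hψc, hψΩ⟩
  simp only [lineDerivOp_testFunction_apply] at this
  exact this

end HasWeakLineDerivOn

variable [BorelSpace E]

theorem integrable_testFunction_smul (hu : IntegrableOn u Ω μ) (φ : 𝓓(Ω, ℝ)) :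
    Integrable (fun x ↦ φ x • u x) μ :=
  φ.integrable_bilin (.lsmul ℝ ℝ) hu.locallyIntegrableOn

variable [FiniteDimensional ℝ E] [μ.IsAddHaarMeasure]

theorem hasDerivAt_integral_smul_comp_add_smul {ψ : E → ℝ} (hψ : ContDiff ℝ 1 ψ)
    (hψc : HasCompactSupport ψ) (hu : LocallyIntegrable u μ) (e : E) (s : ℝ) :
    HasDerivAt (fun s : ℝ ↦ ∫ x, ψ x • u (x + s • e) ∂μ)
      (-∫ x, fderiv ℝ ψ x e • u (x + s • e) ∂μ) s := by
  have hneg : HasCompactSupport fun x ↦ ψ (-x) := hψc.comp_homeomorph (.neg E)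
  have hψn : ContDiff ℝ 1 fun x ↦ ψ (-x) := hψ.comp contDiff_neg
  have hfderiv : ∀ x, fderiv ℝ (fun x ↦ ψ (-x)) x = -fderiv ℝ ψ (-x) := fun x ↦ by
    simpa only [neg_one_smul] using fderiv_comp_smul (f := ψ) (x := x) (-1 : ℝ)
  have hshift : ∀ (f : E → ℝ) (s : ℝ),
      ∫ x, f x • u (x + s • e) ∂μ = ∫ x, f (x - s • e) • u x ∂μ := fun f s ↦ by
    simpa using integral_add_right_eq_self (μ := μ) (fun x ↦ f (x - s • e) • u x) (s • e)
  have h := (hneg.hasFDerivAt_convolution_right (ContinuousLinearMap.lsmul ℝ ℝ).flip hu hψn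
    (s • e)).comp_hasDerivAt s ((hasDerivAt_id s).smul_const e)
  rw [one_smul, convolution_precompR_apply _ hu (hneg.fderiv ℝ)
    (hψn.continuous_fderiv one_ne_zero)] at h
  simp only [hshift]
  convert h using 1
  · ext s
    simp [convolution_def]
  · simp [convolution_def, hfderiv, integral_neg]

theorem HasWeakLineDerivOn.hasDerivAt_integral_smul_comp_add_smul
    (h : HasWeakLineDerivOn μ u u' Ω e) (hu : LocallyIntegrable u μ) {ψ : E → ℝ}
    (hψ : ContDiff ℝ (⊤ : ℕ∞) ψ) (hψc : HasCompactSupport ψ) {s : ℝ}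
    (hs : ∀ x ∈ tsupport ψ, x + s • e ∈ Ω) :
    HasDerivAt (fun s : ℝ ↦ ∫ x, ψ x • u (x + s • e) ∂μ)
      (∫ x, ψ x • u' (x + s • e) ∂μ) s := by
  have hts : tsupport (fun x ↦ ψ (x - s • e)) ⊆ Ω := fun x hx ↦ by
    simpa using hs (x - s • e)
      (tsupport_comp_subset_preimage ψ (f := fun x ↦ x - s • e) (by fun_prop) hx)
  have hweak := h.integral_fderiv_smul (ψ := fun x ↦ ψ (x - s • e))
    (hψ.comp (contDiff_id.sub contDiff_const))
    (hψc.comp_homeomorph (.subRight (s • e))) hts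
  convert _root_.hasDerivAt_integral_smul_comp_add_smul (hψ.of_le (mod_cast le_top)) hψc hu e s
    using 1
  rw [← integral_add_right_eq_self (μ := μ) _ (-(s • e)),
    ← integral_add_right_eq_self (μ := μ) (fun x ↦ fderiv ℝ ψ x e • u (x + s • e)) (-(s • e))]
  simpa [← sub_eq_add_neg, fderiv_comp_sub] using (neg_eq_iff_eq_neg.2 hweak).symm

theorem HasWeakLineDerivOn.integral_smul_sub_eq (h : HasWeakLineDerivOn μ u u' Ω e)
    (hu : Integrable u μ) (hu' : Integrable u' μ) {ψ : E → ℝ} (hψ : ContDiff ℝ (⊤ : ℕ∞) ψ)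
    (hψc : HasCompactSupport ψ) {t : ℝ} (ht : 0 ≤ t)
    (hψΩ : ∀ x ∈ tsupport ψ, ∀ s ∈ Icc 0 t, x + s • e ∈ Ω) [CompleteSpace F] :
    ∫ x, ψ x • (u (x + t • e) - u x) ∂μ =
      ∫ x, ψ x • (∫ s in (0 : ℝ)..t, u' (x + s • e)) ∂μ := by
  obtain ⟨C, hC⟩ := hψc.exists_bound_of_continuous hψ.continuous
  have hψu : ∀ s : ℝ, Integrable (fun x ↦ ψ x • u (x + s • e)) μ := fun s ↦
    (hu.comp_add_right (s • e)).bdd_smul C hψ.continuous.aestronglyMeasurable (.of_forall hC)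
  have hprod : Integrable (Function.uncurry fun x (s : ℝ) ↦ ψ x • u' (x + s • e))
      (μ.prod (volume.restrict (Ioc 0 t))) :=
    (integrable_prod_comp_add_smul hu' e _).bdd_smul C
      (hψ.continuous.comp continuous_fst).aestronglyMeasurable (.of_forall fun p ↦ hC p.1)
  calc ∫ x, ψ x • (u (x + t • e) - u x) ∂μ
      = ∫ x, ψ x • u (x + t • e) ∂μ - ∫ x, ψ x • u (x + (0 : ℝ) • e) ∂μ := by
        rw [← integral_sub (hψu t) (hψu 0)]
        simp only [zero_smul, add_zero, smul_sub]
    _ = ∫ s in (0 : ℝ)..t, ∫ x, ψ x • u' (x + s • e) ∂μ := by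
        symm
        apply intervalIntegral.integral_eq_sub_of_hasDerivAt
        · exact fun s hs ↦ h.hasDerivAt_integral_smul_comp_add_smul hu.locallyIntegrable hψ hψc
            fun x hx ↦ hψΩ x hx s (uIcc_of_le ht ▸ hs)
        · rw [intervalIntegrable_iff_integrableOn_Ioc_of_le ht]
          exact hprod.integral_prod_right
    _ = ∫ x, ψ x • (∫ s in (0 : ℝ)..t, u' (x + s • e)) ∂μ := by
        simp only [intervalIntegral.integral_of_le ht]
        rw [← integral_integral_swap hprod]
        simp only [integral_smul]

theorem HasWeakLineDerivOn.ae_sub_eq_integral (h : HasWeakLineDerivOn μ u u' Ω e)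
    (hu : Integrable u μ) (hu' : Integrable u' μ) {U : Set E} (hU : IsOpen U) {t : ℝ} (ht : 0 ≤ t)
    (hUΩ : ∀ x ∈ U, ∀ s ∈ Icc 0 t, x + s • e ∈ Ω) [CompleteSpace F] :
    ∀ᵐ x ∂μ, x ∈ U → u (x + t • e) - u x = ∫ s in (0 : ℝ)..t, u' (x + s • e) := by
  have hdiff : Integrable (fun x ↦ u (x + t • e) - u x) μ := (hu.comp_add_right (t • e)).sub hu
  have hint : Integrable (fun x ↦ ∫ s in (0 : ℝ)..t, u' (x + s • e)) μ := by
    simp only [intervalIntegral.integral_of_le ht]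
    exact (integrable_prod_comp_add_smul hu' e _).integral_prod_left
  have hzero := hU.ae_eq_zero_of_integral_contDiff_smul_eq_zero
    ((hdiff.sub hint).locallyIntegrable.locallyIntegrableOn U) fun ψ hψ hψc hψU ↦ by
      obtain ⟨C, hC⟩ := hψc.exists_bound_of_continuous hψ.continuous
      simp only [Pi.sub_apply, smul_sub _ (_ - _)]
      refine (integral_sub (hdiff.bdd_smul C hψ.continuous.aestronglyMeasurable (.of_forall hC))
        (hint.bdd_smul C hψ.continuous.aestronglyMeasurable (.of_forall hC))).trans
        (sub_eq_zero.2 ?_)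
      exact h.integral_smul_sub_eq hu hu' hψ hψc ht fun x hx ↦ hUΩ x (hψU hx)
  filter_upwards [hzero] with x hx hxU
  exact sub_eq_zero.1 (hx hxU)

end WeakDerivative

section ChainInequality

open scoped Distributions LineDeriv
open TopologicalSpace (Opens)

theorem enorm_inv_smul_intervalIntegral_sub_le {F : Type*} [NormedAddCommGroup F] [NormedSpace ℝ F]
    [CompleteSpace F] {g : ℝ → F} {t : ℝ} (ht : 0 < t) (hg : IntegrableOn g (Ioc 0 t)) (c : F) :
    ‖t⁻¹ • (∫ s in (0 : ℝ)..t, g s) - c‖ₑ ≤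
      ENNReal.ofReal t⁻¹ * ∫⁻ s in Ioc 0 t, ‖g s - c‖ₑ := by
  have hc : t⁻¹ • (∫ s in (0 : ℝ)..t, g s) - c = t⁻¹ • ∫ s in Ioc 0 t, (g s - c) := by
    rw [integral_sub hg (integrable_const c), ← intervalIntegral.integral_of_le ht.le, smul_sub,
      ← intervalIntegral.integral_of_le ht.le, intervalIntegral.integral_const, sub_zero,
      inv_smul_smul₀ ht.ne']
  rw [hc, enorm_smul, Real.enorm_of_nonneg (inv_nonneg.2 ht.le)]
  gcongr
  exact enorm_integral_le_lintegral_enorm _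

variable {E F G : Type*} [NormedAddCommGroup E] [NormedSpace ℝ E] [MeasurableSpace E]
  [BorelSpace E] {μ : Measure E} [NormedAddCommGroup F] [NormedSpace ℝ F]
  [NormedAddCommGroup G] [NormedSpace ℝ G]
  {Ω : Opens E} {u u' : E → F} {e : E} {f : E → G} {k : E → ℝ≥0∞} {κ : ℝ≥0∞}

theorem enorm_integral_testFunction_smul_slope_le {φ : 𝓓(Ω, ℝ)} {t B : ℝ}
    (hB : ∀ x, ‖φ x‖ ≤ B) (hk : AEMeasurable k (μ.restrict Ω)) (hκ : κ ≠ ⊤) (hkκ : ∀ x, k x ≤ κ)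
    (hu' : AEStronglyMeasurable u' μ) (ht : ∀ x ∈ tsupport φ, x + t • e ∈ Ω)
    (hf : ∀ x ∈ Ω, ∀ x' ∈ Ω, ‖f x - f x'‖ₑ ≤ k x * ‖u x - u x'‖ₑ) :
    ‖∫ x, φ x • t⁻¹ • (f (x + t • e) - f x) ∂μ‖ₑ ≤
      (∫⁻ x in Ω, ‖φ x‖ₑ * (k x * ‖u' x‖ₑ) ∂μ) + ENNReal.ofReal B * κ *
        ∫⁻ x in tsupport φ, ‖t⁻¹ • (u (x + t • e) - u x) - u' x‖ₑ ∂μ := by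
  have hle : ∀ x ∈ tsupport φ, ‖φ x • t⁻¹ • (f (x + t • e) - f x)‖ₑ ≤
      ‖φ x‖ₑ * (k x * ‖u' x‖ₑ) +
        ENNReal.ofReal B * κ * ‖t⁻¹ • (u (x + t • e) - u x) - u' x‖ₑ := fun x hx ↦ calc
    ‖φ x • t⁻¹ • (f (x + t • e) - f x)‖ₑ
        ≤ ‖φ x‖ₑ * (k x * ‖t⁻¹ • (u (x + t • e) - u x)‖ₑ) := by
          rw [enorm_smul, enorm_smul, enorm_smul, mul_left_comm (k x), enorm_sub_rev (f _),
            enorm_sub_rev (u _)]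
          gcongr
          exact hf x (φ.tsupport_subset hx) _ (ht x hx)
    _ ≤ ‖φ x‖ₑ * (k x * (‖u' x‖ₑ + ‖t⁻¹ • (u (x + t • e) - u x) - u' x‖ₑ)) := by
          gcongr
          exact (add_sub_cancel (u' x) _ ▸ enorm_add_le _ _ :)
    _ ≤ _ := by
          rw [mul_add, mul_add, ← mul_assoc _ (k x) ‖_ - _‖ₑ]
          gcongr
          · exact (ofReal_norm (φ x)).symm.trans_le (ENNReal.ofReal_le_ofReal (hB x))
          · exact hkκ x
  calc ‖∫ x, φ x • t⁻¹ • (f (x + t • e) - f x) ∂μ‖ₑ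
      = ‖∫ x in tsupport φ, φ x • t⁻¹ • (f (x + t • e) - f x) ∂μ‖ₑ := by
        rw [setIntegral_eq_integral_of_forall_compl_eq_zero fun x hx ↦ by
          rw [image_eq_zero_of_notMem_tsupport hx, zero_smul]]
    _ ≤ ∫⁻ x in tsupport φ, ‖φ x • t⁻¹ • (f (x + t • e) - f x)‖ₑ ∂μ :=
        enorm_integral_le_lintegral_enorm _
    _ ≤ _ := setLIntegral_mono' (isClosed_tsupport φ).measurableSet hle
    _ ≤ _ := by
        rw [lintegral_add_left' ?_, lintegral_const_mul' _ _ (by finiteness)]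
        · gcongr
          exact φ.tsupport_subset
        · exact φ.continuous.aestronglyMeasurable.enorm.mul
            ((hk.mono_set φ.tsupport_subset).mul hu'.restrict.enorm)

variable [FiniteDimensional ℝ E] [μ.IsAddHaarMeasure]

theorem tendsto_integral_testFunction_smul_slope (hf : Integrable f μ) (φ : 𝓓(Ω, ℝ)) (e : E) :
    Tendsto (fun t : ℝ ↦ ∫ x, φ x • t⁻¹ • (f (x + t • e) - f x) ∂μ) (𝓝[>] 0)
      (𝓝 (-∫ x, (∂_{e} φ) x • f x ∂μ)) := by
  obtain ⟨B, hB⟩ := φ.hasCompactSupport.exists_bound_of_continuous φ.continuous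
  have hφf : ∀ t : ℝ, Integrable (fun x ↦ φ x • f (x + t • e)) μ := fun t ↦
    (hf.comp_add_right (t • e)).bdd_smul B φ.continuous.aestronglyMeasurable (.of_forall hB)
  have h := (hasDerivAt_integral_smul_comp_add_smul (φ.contDiff.of_le (mod_cast le_top))
    φ.hasCompactSupport hf.locallyIntegrable e 0).tendsto_slope_zero_right
  simp only [zero_smul, zero_add, add_zero, ← lineDerivOp_testFunction_apply] at h
  refine h.congr fun t ↦ ?_
  have h0 := hφf 0
  simp only [zero_smul, add_zero] at h0
  rw [← integral_sub (hφf t) h0, ← integral_smul]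
  simp only [smul_comm (φ _) t⁻¹, smul_sub (φ _)]

variable [CompleteSpace F]

namespace HasWeakLineDerivOn

theorem tendsto_setLIntegral_enorm_slope_sub (h : HasWeakLineDerivOn μ u u' Ω e)
    (hu : Integrable u μ) (hu' : Integrable u' μ) {K : Set E} (hK : IsCompact K)
    (hKΩ : K ⊆ Ω) :
    Tendsto (fun t : ℝ ↦ ∫⁻ x in K, ‖t⁻¹ • (u (x + t • e) - u x) - u' x‖ₑ ∂μ)
      (𝓝[>] 0) (𝓝 0) := by
  obtain ⟨U, hU, hKU, hUΩ⟩ := exists_isOpen_eventually_add_smul_mem hK Ω.isOpen hKΩ e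
  refine tendsto_of_tendsto_of_tendsto_of_le_of_le' tendsto_const_nhds
    (tendsto_ofReal_inv_mul_setLIntegral_Ioc (tendsto_lintegral_enorm_comp_add_smul_sub hu' e))
    (.of_forall fun _ ↦ zero_le) ?_
  filter_upwards [nhdsWithin_le_nhds hUΩ, self_mem_nhdsWithin] with t htΩ ht
  have ht : 0 < t := ht
  have hprod := integrable_prod_comp_add_smul hu' e (volume.restrict (Ioc 0 t))
  have hle : ∀ᵐ x ∂μ, x ∈ K → ‖t⁻¹ • (u (x + t • e) - u x) - u' x‖ₑ ≤
      ENNReal.ofReal t⁻¹ * ∫⁻ s in Ioc 0 t, ‖u' (x + s • e) - u' x‖ₑ := by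
    filter_upwards [h.ae_sub_eq_integral hu hu' hU ht.le fun x hx s hs ↦ htΩ s hs x hx,
      hprod.prod_right_ae] with x hx hint hxK
    rw [hx (hKU hxK)]
    exact enorm_inv_smul_intervalIntegral_sub_le ht hint _
  calc ∫⁻ x in K, ‖t⁻¹ • (u (x + t • e) - u x) - u' x‖ₑ ∂μ
      ≤ ∫⁻ x in K, ENNReal.ofReal t⁻¹ * (∫⁻ s in Ioc 0 t, ‖u' (x + s • e) - u' x‖ₑ) ∂μ :=
        setLIntegral_mono_ae' hK.measurableSet hle
    _ ≤ ENNReal.ofReal t⁻¹ * ∫⁻ x, (∫⁻ s in Ioc 0 t, ‖u' (x + s • e) - u' x‖ₑ) ∂μ := by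
        rw [lintegral_const_mul' _ _ ENNReal.ofReal_ne_top]
        gcongr
        exact Measure.restrict_le_self
    _ = ENNReal.ofReal t⁻¹ * ∫⁻ s in Ioc 0 t, ∫⁻ x, ‖u' (x + s • e) - u' x‖ₑ ∂μ := by
        rw [lintegral_lintegral_swap]
        exact (hprod.aestronglyMeasurable.sub hu'.aestronglyMeasurable.comp_fst).enorm

theorem enorm_integral_lineDerivOp_smul_le_of_integrable (h : HasWeakLineDerivOn μ u u' Ω e)
    (hu : Integrable u μ) (hu' : Integrable u' μ) (hf : IntegrableOn f Ω μ)
    (hk : AEMeasurable k (μ.restrict Ω)) (hκ : κ ≠ ⊤) (hkκ : ∀ x, k x ≤ κ)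
    (hfu : ∀ x ∈ Ω, ∀ x' ∈ Ω, ‖f x - f x'‖ₑ ≤ k x * ‖u x - u x'‖ₑ) (φ : 𝓓(Ω, ℝ)) :
    ‖∫ x, (∂_{e} φ) x • f x ∂μ‖ₑ ≤ ∫⁻ x in Ω, ‖φ x‖ₑ * (k x * ‖u' x‖ₑ) ∂μ := by
  obtain ⟨B, hB⟩ := φ.hasCompactSupport.exists_bound_of_continuous φ.continuous
  have hΩ : MeasurableSet (Ω : Set E) := Ω.isOpen.measurableSet
  rw [integral_testFunction_smul_congr (indicator_ae_eq_restrict hΩ).symm (∂_{e} φ), ← enorm_neg]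
  obtain ⟨U, -, hU, hUΩ⟩ := exists_isOpen_eventually_add_smul_mem φ.hasCompactSupport Ω.isOpen
    φ.tsupport_subset e
  have hslope := h.tendsto_setLIntegral_enorm_slope_sub hu hu' φ.hasCompactSupport
    φ.tsupport_subset
  have hbound := tendsto_const_nhds (x := ∫⁻ x in Ω, ‖φ x‖ₑ * (k x * ‖u' x‖ₑ) ∂μ) |>.add
    (ENNReal.Tendsto.const_mul hslope (.inr (by finiteness : ENNReal.ofReal B * κ ≠ ⊤)))
  rw [mul_zero, add_zero] at hbound
  refine le_of_tendsto_of_tendsto (tendsto_integral_testFunction_smul_slope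
    ((integrable_indicator_iff hΩ).2 hf) φ e).enorm hbound ?_
  filter_upwards [nhdsWithin_le_nhds hUΩ, self_mem_nhdsWithin] with t htΩ ht
  have htφ : ∀ x ∈ tsupport φ, x + t • e ∈ Ω := fun x hx ↦ htΩ t ⟨ht.le, le_rfl⟩ x (hU hx)
  refine enorm_integral_testFunction_smul_slope_le hB hk hκ hkκ hu'.aestronglyMeasurable htφ
    fun x hx x' hx' ↦ ?_
  simpa only [indicator_of_mem hx, indicator_of_mem hx'] using hfu x hx x' hx'

/-- A tested inequality is all that is claimed, because a Lipschitz function of `u` need not be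
differentiable along the values of `u`, so the chain rule itself has no meaning. -/
theorem enorm_integral_lineDerivOp_smul_le (h : HasWeakLineDerivOn μ u u' Ω e)
    (hu : IntegrableOn u Ω μ) (hu' : IntegrableOn u' Ω μ) (hf : IntegrableOn f Ω μ)
    (hk : AEMeasurable k (μ.restrict Ω)) (hκ : κ ≠ ⊤) (hkκ : ∀ x, k x ≤ κ)
    (hfu : ∀ x ∈ Ω, ∀ x' ∈ Ω, ‖f x - f x'‖ₑ ≤ k x * ‖u x - u x'‖ₑ) (φ : 𝓓(Ω, ℝ)) :
    ‖∫ x, (∂_{e} φ) x • f x ∂μ‖ₑ ≤ ∫⁻ x in Ω, ‖φ x‖ₑ * (k x * ‖u' x‖ₑ) ∂μ := by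
  have hΩ : MeasurableSet (Ω : Set E) := Ω.isOpen.measurableSet
  have hind : ∀ v : E → F, v =ᵐ[μ.restrict Ω] (Ω : Set E).indicator v := fun v ↦
    (indicator_ae_eq_restrict hΩ).symm
  refine ((h.congr_ae (hind u) (hind u')).enorm_integral_lineDerivOp_smul_le_of_integrable
    ((integrable_indicator_iff hΩ).2 hu) ((integrable_indicator_iff hΩ).2 hu') hf hk hκ hkκ
    (fun x hx x' hx' ↦ ?_) φ).trans_eq (setLIntegral_congr_fun hΩ fun x hx ↦ ?_)
  · simpa only [indicator_of_mem hx, indicator_of_mem hx'] using hfu x hx x' hx'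
  · simp only [indicator_of_mem hx]

end HasWeakLineDerivOn

end ChainInequality

section Riesz

variable {V X F : Type*} [AddCommGroup V] [Module ℝ V] [MeasurableSpace X] {μ : Measure X}

theorem exists_forall_eq_inner_of_norm_le {H : Type*} [NormedAddCommGroup H]
    [InnerProductSpace ℝ H] [CompleteSpace H] {J : V →ₗ[ℝ] H} {l : V →ₗ[ℝ] ℝ} {C : ℝ}
    (hl : ∀ v, ‖l v‖ ≤ C * ‖J v‖) : ∃ h : H, ∀ v, l v = ⟪h, J v⟫ := by
  obtain ⟨g, hg, -⟩ := exists_extension_norm_eq _ (l.extendOfNorm J.rangeRestrict)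
  refine ⟨(InnerProductSpace.toDual ℝ H).symm g, fun v ↦ ?_⟩
  rw [InnerProductSpace.toDual_symm_apply]
  exact ((hg (J.rangeRestrict v)).trans
    (LinearMap.extendOfNorm_eq J.surjective_rangeRestrict.denseRange ⟨C, hl⟩ v)).symm

theorem exists_memLp_forall_eq_integral_mul {J : V →ₗ[ℝ] X → ℝ} (hJ : ∀ v, MemLp (J v) 2 μ)
    {l : V →ₗ[ℝ] ℝ} {C : ℝ≥0} (hl : ∀ v, ‖l v‖ₑ ≤ C * eLpNorm (J v) 2 μ) :
    ∃ h, MemLp h 2 μ ∧ ∀ v, l v = ∫ x, J v x * h x ∂μ := by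
  let J₂ : V →ₗ[ℝ] Lp ℝ 2 μ :=
    { toFun v := (hJ v).toLp
      map_add' v w := by simp only [map_add]; exact (hJ v).toLp_add (hJ w)
      map_smul' c v := by simp only [map_smul]; exact (hJ v).toLp_const_smul c }
  obtain ⟨h, hh⟩ := exists_forall_eq_inner_of_norm_le (J := J₂) (l := l) (C := C) fun v ↦ by
    have := ENNReal.toReal_mono (by have := (hJ v).2; finiteness) (hl v)
    simpa [J₂, Lp.norm_toLp] using this
  refine ⟨h, Lp.memLp h, fun v ↦ ?_⟩
  rw [hh, L2.inner_def]
  exact integral_congr_ae ((hJ v).coeFn_toLp.mono fun x hx ↦ by simp [J₂, hx])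

theorem exists_memLp_forall_eq_integral_smul [NormedAddCommGroup F] [NormedSpace ℝ F]
    [FiniteDimensional ℝ F] {J : V →ₗ[ℝ] X → ℝ} (hJ : ∀ v, MemLp (J v) 2 μ)
    {l : V →ₗ[ℝ] F} {C : ℝ≥0} (hl : ∀ v, ‖l v‖ₑ ≤ C * eLpNorm (J v) 2 μ) :
    ∃ h : X → F, MemLp h 2 μ ∧ ∀ v, l v = ∫ x, J v x • h x ∂μ := by
  let b := Module.finBasis ℝ F
  have hcoord : ∀ i, ∃ h, MemLp h 2 μ ∧ ∀ v, b.coord i (l v) = ∫ x, J v x * h x ∂μ := fun i ↦ by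
    let c : F →L[ℝ] ℝ := (b.coord i).toContinuousLinearMap
    refine exists_memLp_forall_eq_integral_mul hJ (l := b.coord i ∘ₗ l) (C := ‖c‖₊ * C) fun v ↦ ?_
    calc ‖c (l v)‖ₑ ≤ ‖c‖ₑ * ‖l v‖ₑ := c.le_opENorm _
      _ ≤ ‖c‖ₑ * (C * eLpNorm (J v) 2 μ) := by gcongr; exact hl v
      _ = _ := by rw [ENNReal.coe_mul, mul_assoc]; rfl
  choose h hh hlh using hcoord
  have hmem : MemLp (fun x ↦ ∑ i, h i x • b i) 2 μ := memLp_finsetSum _ fun i _ ↦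
    (ContinuousLinearMap.toSpanSingleton ℝ (b i)).comp_memLp' (hh i)
  refine ⟨_, hmem, fun v ↦ ?_⟩
  have hint : ∀ i, Integrable (fun x ↦ (J v x * h i x) • b i) μ := fun i ↦
    ((hJ v).integrable_mul (hh i)).smul_const _
  simp only [Finset.smul_sum, smul_smul]
  rw [integral_finsetSum _ fun i _ ↦ hint i]
  conv_lhs => rw [← b.sum_repr (l v)]
  refine Finset.sum_congr rfl fun i _ ↦ ?_
  rw [integral_smul_const, ← hlh i v, b.coord_apply]

end Riesz

section WeakGradient

open scoped Distributions LineDeriv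
open TopologicalSpace (Opens)

variable {E F : Type*} [NormedAddCommGroup E] [NormedSpace ℝ E] [MeasurableSpace E]
  {μ : Measure E} [NormedAddCommGroup F] [NormedSpace ℝ F]
  {Ω : Opens E} {u u' : E → F} {e : E} {g : E → ℝ≥0∞}

theorem lintegral_enorm_testFunction_mul_ne_top (φ : 𝓓(Ω, ℝ)) (hgi : ∫⁻ x in Ω, g x ∂μ ≠ ⊤) :
    ∫⁻ x in Ω, ‖φ x‖ₑ * g x ∂μ ≠ ⊤ := by
  obtain ⟨B, hB⟩ := φ.hasCompactSupport.exists_bound_of_continuous φ.continuous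
  refine ne_top_of_le_ne_top (ENNReal.mul_ne_top ENNReal.ofReal_ne_top hgi)
    ((lintegral_mono fun x ↦ ?_).trans_eq (lintegral_const_mul' (ENNReal.ofReal B) _ (by simp)))
  gcongr
  exact (ofReal_norm (φ x)).symm.trans_le (ENNReal.ofReal_le_ofReal (hB x))

theorem integral_testFunction_smul_withDensity (hg : AEMeasurable g (μ.restrict Ω))
    (hgi : ∫⁻ x in Ω, g x ∂μ ≠ ⊤) (φ : 𝓓(Ω, ℝ)) (h : E → F) :
    ∫ x, φ x • h x ∂(μ.restrict Ω).withDensity g = ∫ x, φ x • (g x).toReal • h x ∂μ := by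
  rw [integral_withDensity_eq_integral_toReal_smul₀ hg (ae_lt_top' hg hgi),
    ← setIntegral_testFunction_smul]
  simp only [smul_comm (φ _)]

variable [BorelSpace E]

theorem exists_hasWeakLineDerivOn_of_enorm_integral_le [FiniteDimensional ℝ F]
    (hu : LocallyIntegrableOn u Ω μ) (hg : AEMeasurable g (μ.restrict Ω))
    (hgi : ∫⁻ x in Ω, g x ∂μ ≠ ⊤)
    (hle : ∀ φ : 𝓓(Ω, ℝ), ‖∫ x, (∂_{e} φ) x • u x ∂μ‖ₑ ≤ ∫⁻ x in Ω, ‖φ x‖ₑ * g x ∂μ) :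
    ∃ u', IntegrableOn u' Ω μ ∧ HasWeakLineDerivOn μ u u' Ω e := by
  let ν := (μ.restrict Ω).withDensity g
  have : IsFiniteMeasure ν := isFiniteMeasure_withDensity hgi
  let J : 𝓓(Ω, ℝ) →ₗ[ℝ] E → ℝ := { toFun φ := φ, map_add' _ _ := rfl, map_smul' _ _ := rfl }
  have hJ : ∀ φ, MemLp (J φ) 2 ν := fun φ ↦
    φ.continuous.memLp_of_hasCompactSupport φ.hasCompactSupport
  let l : 𝓓(Ω, ℝ) →L[ℝ] F :=
    -(TestFunction.integralAgainstBilinCLM (.lsmul ℝ ℝ) μ u ∘L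
      LineDeriv.lineDerivOpCLM ℝ 𝓓(Ω, ℝ) e)
  have hl : ∀ φ, l φ = -∫ x, (∂_{e} φ) x • u x ∂μ := fun φ ↦ congr_arg (- ·)
    (TestFunction.integralAgainstBilinCLM_eq_integral hu)
  obtain ⟨h, hh, hlh⟩ := exists_memLp_forall_eq_integral_smul hJ (l := l.toLinearMap)
    (C := (ν univ ^ (1 / 2 : ℝ)).toNNReal) fun φ ↦ calc
      ‖l φ‖ₑ ≤ ∫⁻ x in Ω, ‖φ x‖ₑ * g x ∂μ := by rw [hl, enorm_neg]; exact hle φ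
      _ = eLpNorm φ 1 ν := by
        rw [eLpNorm_one_eq_lintegral_enorm, lintegral_withDensity_eq_lintegral_mul₀ hg
          φ.continuous.enorm.aemeasurable]
        simp only [Pi.mul_apply, mul_comm]
      _ ≤ eLpNorm φ 2 ν * ν univ ^ (1 / 1 - 1 / 2 : ℝ) := by
        simpa using eLpNorm_le_eLpNorm_mul_rpow_measure_univ (p := 1) (q := 2) one_le_two
          φ.continuous.aestronglyMeasurable
      _ = _ := by
        rw [mul_comm, ENNReal.coe_toNNReal (by finiteness)]; norm_num; rfl
  refine ⟨fun x ↦ (g x).toReal • h x, ?_, fun φ ↦ ?_⟩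
  · exact (integrable_withDensity_iff_integrable_smul₀' hg (ae_lt_top' hg hgi)).1
      (hh.integrable one_le_two)
  · rw [← integral_testFunction_smul_withDensity hg hgi]
    exact neg_eq_iff_eq_neg.1 ((hl φ).symm.trans (hlh φ))

variable [FiniteDimensional ℝ E] [μ.IsAddHaarMeasure]

theorem exists_testFunction_eq_normed_sub (b : ContDiffBump (0 : E)) {x : E}
    (hx : Metric.closedBall x b.rOut ⊆ Ω) :
    ∃ φ : 𝓓(Ω, ℝ), ∀ y, φ y = b.normed μ (x - y) := by
  refine ⟨⟨fun y ↦ b.normed μ (x - y), b.contDiff_normed.comp (contDiff_const.sub contDiff_id),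
    b.hasCompactSupport_normed.comp_homeomorph (.subLeft x), fun y hy ↦ hx ?_⟩, fun y ↦ rfl⟩
  have := tsupport_comp_subset_preimage (b.normed μ) (f := fun y ↦ x - y) (by fun_prop) hy
  rwa [mem_preimage, b.tsupport_normed_eq, mem_closedBall_zero_iff, ← dist_eq_norm,
    dist_comm] at this

theorem ae_norm_le_of_norm_integral_testFunction_smul_le [CompleteSpace F]
    {f : E → F} {G : E → ℝ} (hf : IntegrableOn f Ω μ) (hG : IntegrableOn G Ω μ)
    (h : ∀ φ : 𝓓(Ω, ℝ), (∀ x, 0 ≤ φ x) → ‖∫ x, φ x • f x ∂μ‖ ≤ ∫ x, φ x • G x ∂μ) :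
    ∀ᵐ x ∂μ.restrict Ω, ‖f x‖ ≤ G x := by
  have hΩ : MeasurableSet (Ω : Set E) := Ω.isOpen.measurableSet
  let b : ℕ → ContDiffBump (0 : E) := fun n ↦
    ⟨1 / (n + 1), 2 * (1 / (n + 1)), by positivity, lt_two_mul_self (by positivity)⟩
  have hb : Tendsto (fun n ↦ (b n).rOut) atTop (𝓝 0) := by
    simpa [b] using (tendsto_one_div_add_atTop_nhds_zero_nat (𝕜 := ℝ)).const_mul 2
  have hb' : ∀ᶠ n in atTop, (b n).rOut ≤ 2 * (b n).rIn := .of_forall fun n ↦ le_rfl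
  rw [ae_restrict_iff' hΩ]
  filter_upwards [ContDiffBump.ae_convolution_tendsto_right_of_locallyIntegrable hb hb'
      ((integrable_indicator_iff hΩ).2 hf).locallyIntegrable,
    ContDiffBump.ae_convolution_tendsto_right_of_locallyIntegrable hb hb'
      ((integrable_indicator_iff hΩ).2 hG).locallyIntegrable] with x hfx hGx hx
  rw [indicator_of_mem hx] at hfx hGx
  refine le_of_tendsto_of_tendsto hfx.norm hGx ?_
  obtain ⟨ε, hε, hball⟩ := Metric.isOpen_iff.1 Ω.isOpen x hx
  filter_upwards [hb.eventually_lt_const hε] with n hn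
  obtain ⟨φ, hφ⟩ := exists_testFunction_eq_normed_sub (μ := μ) (b n)
    ((Metric.closedBall_subset_ball hn).trans hball)
  simp only [convolution_eq_swap, ContinuousLinearMap.lsmul_apply, ← hφ]
  rw [← integral_testFunction_smul_congr (indicator_ae_eq_restrict hΩ).symm,
    ← integral_testFunction_smul_congr (indicator_ae_eq_restrict hΩ).symm]
  exact h φ fun y ↦ (hφ y).symm ▸ (b n).nonneg_normed _

theorem HasWeakLineDerivOn.ae_enorm_le [CompleteSpace F] (h : HasWeakLineDerivOn μ u u' Ω e)
    (hu' : IntegrableOn u' Ω μ) (hg : AEMeasurable g (μ.restrict Ω))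
    (hgi : ∫⁻ x in Ω, g x ∂μ ≠ ⊤)
    (hle : ∀ φ : 𝓓(Ω, ℝ), ‖∫ x, (∂_{e} φ) x • u x ∂μ‖ₑ ≤ ∫⁻ x in Ω, ‖φ x‖ₑ * g x ∂μ) :
    ∀ᵐ x ∂μ.restrict Ω, ‖u' x‖ₑ ≤ g x := by
  have hpt := ae_norm_le_of_norm_integral_testFunction_smul_le hu'
    (integrable_toReal_of_lintegral_ne_top hg hgi) fun φ hφ ↦ by
      have hfin := lintegral_enorm_testFunction_mul_ne_top φ hgi
      have hφg : AEMeasurable (fun x ↦ ‖φ x‖ₑ * g x) (μ.restrict Ω) :=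
        φ.continuous.enorm.aemeasurable.mul hg
      calc ‖∫ x, φ x • u' x ∂μ‖ = ‖∫ x, (∂_{e} φ) x • u x ∂μ‖ := by rw [h φ, norm_neg]
        _ ≤ (∫⁻ x in Ω, ‖φ x‖ₑ * g x ∂μ).toReal := by
          rw [← toReal_enorm]
          exact ENNReal.toReal_mono hfin (hle φ)
        _ = ∫ x in Ω, φ x • (g x).toReal ∂μ := by
          rw [← integral_toReal hφg (ae_lt_top' hφg hfin)]
          simp only [ENNReal.toReal_mul, toReal_enorm, Real.norm_of_nonneg (hφ _), smul_eq_mul]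
        _ = ∫ x, φ x • (g x).toReal ∂μ := setIntegral_testFunction_smul φ _
  filter_upwards [hpt, ae_lt_top' hg hgi] with x hx hgx
  rwa [← ofReal_norm, ENNReal.ofReal_le_iff_le_toReal hgx.ne]

end WeakGradient

section WeakFDeriv

open scoped Distributions LineDeriv
open TopologicalSpace (Opens)

variable {X E F : Type*} [NormedAddCommGroup E] [NormedSpace ℝ E]
  [NormedAddCommGroup F] [NormedSpace ℝ F]

theorem ae_opENorm_le_of_ae_enorm_apply_le [TopologicalSpace.SeparableSpace E] [MeasurableSpace X]
    {ν : Measure X} {T : X → E →L[ℝ] F} {g : X → ℝ≥0∞}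
    (h : ∀ e, ∀ᵐ x ∂ν, ‖T x e‖ₑ ≤ ‖e‖ₑ * g x) : ∀ᵐ x ∂ν, ‖T x‖ₑ ≤ g x := by
  filter_upwards [ae_all_iff.2 fun n ↦ h (TopologicalSpace.denseSeq E n)] with x hx
  rcases eq_or_ne (g x) ⊤ with htop | hfin
  · exact htop ▸ le_top
  have hclosed : IsClosed {e | ‖T x e‖ₑ ≤ g x * ‖e‖ₑ} :=
    isClosed_le (by fun_prop) ((ENNReal.continuous_const_mul hfin).comp continuous_enorm)
  exact (T x).opENorm_le_bound fun e ↦ (TopologicalSpace.denseRange_denseSeq E).induction_on e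
    hclosed fun n ↦ (hx n).trans_eq (mul_comm _ _)

variable [MeasurableSpace E] {μ : Measure E} {Ω : Opens E} {u : E → F}

/-- `Du` is the weak gradient of `u` on the open set `Ω`: the map `x ↦ Du x e` is the weak
derivative of `u` in every direction `e`. -/
def HasWeakFDerivOn (μ : Measure E) (u : E → F) (Du : E → E →L[ℝ] F) (Ω : Opens E) : Prop :=
  ∀ e, HasWeakLineDerivOn μ u (fun x ↦ Du x e) Ω e

variable [BorelSpace E]

theorem HasWeakLineDerivOn.sum_smul {ι : Type*} {s : Finset ι} {u' : ι → E → F} {e : ι → E}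
    (h : ∀ i ∈ s, HasWeakLineDerivOn μ u (u' i) Ω (e i)) (hu : IntegrableOn u Ω μ)
    (hu' : ∀ i ∈ s, IntegrableOn (u' i) Ω μ) (c : ι → ℝ) :
    HasWeakLineDerivOn μ u (fun x ↦ ∑ i ∈ s, c i • u' i x) Ω (∑ i ∈ s, c i • e i) := fun φ ↦ by
  have hφ : ∀ x, (∂_{∑ i ∈ s, c i • e i} φ) x = ∑ i ∈ s, c i * (∂_{e i} φ) x := fun x ↦ by
    simp only [lineDerivOp_testFunction_apply, map_sum, map_smul, smul_eq_mul]
  simp only [hφ, Finset.sum_smul, Finset.smul_sum, mul_smul, smul_comm (φ _)]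
  refine (integral_finsetSum _ fun i _ ↦ (integrable_testFunction_smul hu (∂_{e i} φ)).smul
    (c i)).trans (.trans ?_ (congr_arg (- ·) (integral_finsetSum _ fun i hi ↦
      (integrable_testFunction_smul (hu' i hi) φ).smul (c i)).symm))
  rw [← Finset.sum_neg_distrib]
  refine Finset.sum_congr rfl fun i hi ↦ ?_
  simp only [Pi.smul_apply, integral_smul, h i hi φ, smul_neg]

theorem exists_hasWeakFDerivOn_of_basis [FiniteDimensional ℝ E] [FiniteDimensional ℝ F]
    {ι : Type*} [Finite ι] (b : Module.Basis ι ℝ E) (hu : IntegrableOn u Ω μ) {u' : ι → E → F}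
    (hu' : ∀ i, IntegrableOn (u' i) Ω μ) (h : ∀ i, HasWeakLineDerivOn μ u (u' i) Ω (b i)) :
    ∃ Du : E → E →L[ℝ] F, IntegrableOn Du Ω μ ∧ HasWeakFDerivOn μ u Du Ω := by
  have := Fintype.ofFinite ι
  let L : (ι → F) →L[ℝ] E →L[ℝ] F :=
    ((b.constr ℝ).trans LinearMap.toContinuousLinearMap).toLinearMap.toContinuousLinearMap
  have hL (f : ι → F) (e : E) : L f e = ∑ i, b.repr e i • f i := b.constr_apply_fintype ℝ f e
  refine ⟨fun x ↦ L fun i ↦ u' i x, L.integrable_comp (.of_eval hu'), fun e ↦ ?_⟩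
  have := HasWeakLineDerivOn.sum_smul (s := Finset.univ) (fun i _ ↦ h i) hu (fun i _ ↦ hu' i)
    (b.repr e)
  rw [b.sum_repr] at this
  simpa only [hL] using this

theorem exists_hasWeakFDerivOn_of_enorm_integral_le [FiniteDimensional ℝ E]
    [FiniteDimensional ℝ F] [μ.IsAddHaarMeasure] {g : E → ℝ≥0∞}
    (hu : IntegrableOn u Ω μ) (hg : AEMeasurable g (μ.restrict Ω)) (hgi : ∫⁻ x in Ω, g x ∂μ ≠ ⊤)
    (hle : ∀ (e : E) (φ : 𝓓(Ω, ℝ)), ‖∫ x, (∂_{e} φ) x • u x ∂μ‖ₑ ≤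
      ∫⁻ x in Ω, ‖φ x‖ₑ * (‖e‖ₑ * g x) ∂μ) :
    ∃ Du : E → E →L[ℝ] F, IntegrableOn Du Ω μ ∧ HasWeakFDerivOn μ u Du Ω ∧
      ∀ᵐ x ∂μ.restrict Ω, ‖Du x‖ₑ ≤ g x := by
  have : CompleteSpace F := FiniteDimensional.complete ℝ F
  have : ProperSpace E := .of_locallyCompactSpace ℝ
  have heg : ∀ e : E, AEMeasurable (fun x ↦ ‖e‖ₑ * g x) (μ.restrict Ω) := fun e ↦ hg.const_mul _
  have hegi : ∀ e : E, ∫⁻ x in Ω, ‖e‖ₑ * g x ∂μ ≠ ⊤ := fun e ↦ by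
    rw [lintegral_const_mul' _ _ enorm_ne_top]
    exact ENNReal.mul_ne_top enorm_ne_top hgi
  choose u' hu' hweak' using fun e ↦
    exists_hasWeakLineDerivOn_of_enorm_integral_le hu.locallyIntegrableOn (heg e) (hegi e) (hle e)
  obtain ⟨Du, hDu, hweak⟩ := exists_hasWeakFDerivOn_of_basis (Module.finBasis ℝ E) hu
    (fun i ↦ hu' _) fun i ↦ hweak' _
  refine ⟨Du, hDu, hweak, ae_opENorm_le_of_ae_enorm_apply_le fun e ↦ ?_⟩
  exact (hweak e).ae_enorm_le (hDu.apply_continuousLinearMap e) (heg e) (hegi e) (hle e)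

theorem memW11_iff_hasWeakFDerivOn {d N : ℕ} {A : Opens (EN N)} {v : EN N → EN d}
    {Dv : EN N → Mat d N} : MemW11 A v Dv ↔
      IntegrableOn v A ∧ IntegrableOn Dv A ∧ HasWeakFDerivOn volume v Dv A := by
  refine and_congr_right fun _ ↦ and_congr_right fun _ ↦ ⟨fun h e φ ↦ ?_, fun h φ hφ hc hA e ↦ ?_⟩
  · rw [← setIntegral_testFunction_smul, ← setIntegral_testFunction_smul φ]
    simpa only [lineDerivOp_testFunction_apply] using
      h φ φ.contDiff φ.hasCompactSupport φ.tsupport_subset e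
  · have := h e ⟨φ, hφ, hc, hA⟩
    rw [← setIntegral_testFunction_smul, ← setIntegral_testFunction_smul ⟨φ, hφ, hc, hA⟩] at this
    simp only [lineDerivOp_testFunction_apply] at this
    exact this

end WeakFDeriv

section Composition

open scoped Distributions LineDeriv
open TopologicalSpace (Opens)

variable {E F G : Type*} [NormedAddCommGroup G] [NormedSpace ℝ G]

/-- The damping of `Φ` by the weight `S` at scale `ε`: it agrees with `Φ` where `ε ≤ S` and tends
to zero where `S` does, so that it is Lipschitz even if the Lipschitz constant of `Φ` near `y` is
only bounded by a multiple of `1 / S y`. -/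
noncomputable def damping (S : F → ℝ) (Φ : F → G) (ε : ℝ) (y : F) : G := (S y / max (S y) ε) • Φ y

theorem tendsto_damping {S : F → ℝ} (Φ : F → G) {y : F} (hy : 0 < S y) :
    Tendsto (fun ε ↦ damping S Φ ε y) (𝓝[>] 0) (𝓝 (Φ y)) := by
  refine tendsto_const_nhds.congr' ?_
  filter_upwards [nhdsWithin_le_nhds (Iic_mem_nhds hy)] with ε hε
  rw [damping, max_eq_left hε, div_self hy.ne', one_smul]

theorem norm_damping_le {S : F → ℝ} {Φ : F → G} (ε : ℝ) {y : F} (hS0 : 0 ≤ S y) :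
    ‖damping S Φ ε y‖ ≤ ‖Φ y‖ := by
  rw [damping, norm_smul, Real.norm_of_nonneg (div_nonneg hS0 (hS0.trans (le_max_left _ _)))]
  exact mul_le_of_le_one_left (norm_nonneg _)
    (div_le_one_of_le₀ (le_max_left _ _) (hS0.trans (le_max_left _ _)))

section PseudoMetricSpace

variable [PseudoMetricSpace F] {S : F → ℝ} {Φ : F → G} {C Δ ε : ℝ}

theorem max_mul_dist_damping_le (hε : 0 < ε) (hS0 : ∀ y, 0 ≤ S y) (hS : LipschitzWith 1 S)
    (hΔ : ∀ y, ‖Φ y‖ ≤ Δ) (hΦ : ∀ y z, S y * dist (Φ y) (Φ z) ≤ C * dist y z) (y z : F) :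
    max (S y) ε * dist (damping S Φ ε y) (damping S Φ ε z) ≤ (C + 2 * Δ) * dist y z := by
  have hm : ∀ y, 0 < max (S y) ε := fun y ↦ lt_max_of_lt_right hε
  have hSyz : |S y - S z| ≤ dist y z := by simpa [Real.dist_eq] using hS.dist_le_mul y z
  have hmzy : |max (S z) ε - max (S y) ε| ≤ dist y z :=
    (abs_max_sub_max_le_abs _ _ _).trans ((abs_sub_comm _ _).trans_le hSyz)
  set θ := S z / max (S z) ε with hθ
  have hθm : θ * max (S z) ε = S z := div_mul_cancel₀ _ (hm z).ne'
  have hθ0 : 0 ≤ θ := div_nonneg (hS0 z) (hm z).le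
  have hθ1 : θ ≤ 1 := div_le_one_of_le₀ (le_max_left _ _) (hm z).le
  have hcoeff : |S y - θ * max (S y) ε| ≤ 2 * dist y z := calc
    _ = |(S y - S z) + θ * (max (S z) ε - max (S y) ε)| := by rw [mul_sub, hθm]; ring_nf
    _ ≤ |S y - S z| + θ * |max (S z) ε - max (S y) ε| :=
      (abs_add_le _ _).trans_eq (by rw [abs_mul, abs_of_nonneg hθ0])
    _ ≤ dist y z + 1 * dist y z := by gcongr
    _ = 2 * dist y z := by ring
  have hsplit : max (S y) ε • (damping S Φ ε y - damping S Φ ε z) =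
      S y • (Φ y - Φ z) + (S y - θ * max (S y) ε) • Φ z := by
    rw [damping, damping, smul_sub, smul_smul, mul_div_cancel₀ _ (hm y).ne', ← hθ]
    module
  calc max (S y) ε * dist (damping S Φ ε y) (damping S Φ ε z)
    _ = ‖S y • (Φ y - Φ z) + (S y - θ * max (S y) ε) • Φ z‖ := by
      rw [← hsplit, norm_smul, Real.norm_of_nonneg (hm y).le, dist_eq_norm]
    _ ≤ S y * dist (Φ y) (Φ z) + |S y - θ * max (S y) ε| * ‖Φ z‖ := by
      refine (norm_add_le _ _).trans_eq ?_
      rw [norm_smul, norm_smul, Real.norm_of_nonneg (hS0 y), Real.norm_eq_abs, dist_eq_norm]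
    _ ≤ C * dist y z + 2 * dist y z * Δ := by
      refine add_le_add (hΦ y z) ?_
      gcongr
      exact hΔ z
    _ = (C + 2 * Δ) * dist y z := by ring

theorem continuous_damping (hε : 0 < ε) (hS0 : ∀ y, 0 ≤ S y) (hS : LipschitzWith 1 S)
    (hΔ : ∀ y, ‖Φ y‖ ≤ Δ) (hΦ : ∀ y z, S y * dist (Φ y) (Φ z) ≤ C * dist y z) :
    Continuous (damping S Φ ε) := by
  refine (LipschitzWith.of_dist_le' (K := (C + 2 * Δ) / ε) fun y z ↦ ?_).continuous
  rw [div_mul_eq_mul_div, le_div_iff₀' hε]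
  refine le_trans ?_ (max_mul_dist_damping_le hε hS0 hS hΔ hΦ y z)
  gcongr
  exact le_max_right _ _

theorem aestronglyMeasurable_comp_of_mul_dist_le [MeasurableSpace E] {ν : Measure E} {u : E → F}
    (hu : AEStronglyMeasurable u ν) (hpos : ∀ᵐ x ∂ν, 0 < S (u x)) (hS0 : ∀ y, 0 ≤ S y)
    (hS : LipschitzWith 1 S) (hΔ : ∀ y, ‖Φ y‖ ≤ Δ)
    (hΦ : ∀ y z, S y * dist (Φ y) (Φ z) ≤ C * dist y z) :
    AEStronglyMeasurable (fun x ↦ Φ (u x)) ν := by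
  refine aestronglyMeasurable_of_tendsto_ae (atTop : Filter ℕ)
    (f := fun n x ↦ damping S Φ (1 / (n + 1)) (u x)) (fun n ↦
      (continuous_damping (by positivity) hS0 hS hΔ hΦ).comp_aestronglyMeasurable hu) ?_
  filter_upwards [hpos] with x hx
  refine (tendsto_damping Φ hx).comp (tendsto_nhdsWithin_iff.2
    ⟨tendsto_one_div_add_atTop_nhds_zero_nat, .of_forall fun n ↦ ?_⟩)
  exact Nat.one_div_pos_of_nat (α := ℝ)

end PseudoMetricSpace

variable [NormedAddCommGroup E] [NormedSpace ℝ E] [FiniteDimensional ℝ E]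
  [MeasurableSpace E] [BorelSpace E] {μ : Measure E} [μ.IsAddHaarMeasure]
  [NormedAddCommGroup F] [NormedSpace ℝ F] [CompleteSpace F] {Ω : Opens E} {u u' : E → F} {e : E}
  {S : F → ℝ} {Φ : F → G} {C Δ : ℝ}

theorem HasWeakLineDerivOn.enorm_integral_lineDerivOp_smul_damping_le
    (h : HasWeakLineDerivOn μ u u' Ω e) (hΩ : μ Ω ≠ ⊤) (hu : IntegrableOn u Ω μ)
    (hu' : IntegrableOn u' Ω μ) (hS0 : ∀ y, 0 ≤ S y) (hS : LipschitzWith 1 S)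
    (hΔ : ∀ y, ‖Φ y‖ ≤ Δ) (hΦ : ∀ y z, S y * dist (Φ y) (Φ z) ≤ C * dist y z)
    {ε : ℝ} (hε : 0 < ε) (φ : 𝓓(Ω, ℝ)) :
    ‖∫ x, (∂_{e} φ) x • damping S Φ ε (u x) ∂μ‖ₑ ≤ ∫⁻ x in Ω,
      ‖φ x‖ₑ * (ENNReal.ofReal (C + 2 * Δ) / ENNReal.ofReal (S (u x)) * ‖u' x‖ₑ) ∂μ := by
  have hf : IntegrableOn (fun x ↦ damping S Φ ε (u x)) Ω μ :=
    .of_bound hΩ.lt_top ((continuous_damping hε hS0 hS hΔ hΦ).comp_aestronglyMeasurable hu.1) Δ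
      (.of_forall fun x ↦ (norm_damping_le ε (hS0 _)).trans (hΔ _))
  have hm : ∀ y, 0 < max (S y) ε := fun y ↦ lt_max_of_lt_right hε
  refine (h.enorm_integral_lineDerivOp_smul_le hu hu' hf
    (k := fun x ↦ ENNReal.ofReal (C + 2 * Δ) / ENNReal.ofReal (max (S (u x)) ε))
    (κ := ENNReal.ofReal (C + 2 * Δ) / ENNReal.ofReal ε) ?_ ?_ (fun x ↦ ?_)
    (fun x _ x' _ ↦ ?_) φ).trans (lintegral_mono fun x ↦ ?_)
  · have := (hS.continuous.max (continuous_const (y := ε))).comp_aestronglyMeasurable hu.1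
    exact aemeasurable_const.div this.aemeasurable.ennreal_ofReal
  · exact ENNReal.div_ne_top ENNReal.ofReal_ne_top (by simpa using hε)
  · gcongr
    exact le_max_right _ _
  · rw [← ENNReal.mul_le_mul_iff_right
      (ENNReal.ofReal_pos.2 (hm (u x))).ne' ENNReal.ofReal_ne_top, ← mul_assoc,
      ENNReal.mul_div_cancel (ENNReal.ofReal_pos.2 (hm (u x))).ne' ENNReal.ofReal_ne_top,
      ← ofReal_norm, ← ofReal_norm, ← ENNReal.ofReal_mul (hm _).le, ← ENNReal.ofReal_mul',
      ← dist_eq_norm, ← dist_eq_norm]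
    · exact ENNReal.ofReal_le_ofReal (max_mul_dist_damping_le hε hS0 hS hΔ hΦ _ _)
    · positivity
  · gcongr
    exact le_max_left _ _

theorem HasWeakLineDerivOn.enorm_integral_lineDerivOp_smul_comp_le
    (h : HasWeakLineDerivOn μ u u' Ω e) (hΩ : μ Ω ≠ ⊤) (hu : IntegrableOn u Ω μ)
    (hu' : IntegrableOn u' Ω μ) (hS0 : ∀ y, 0 ≤ S y) (hS : LipschitzWith 1 S)
    (hpos : ∀ᵐ x ∂μ.restrict Ω, 0 < S (u x))
    (hΔ : ∀ y, ‖Φ y‖ ≤ Δ) (hΦ : ∀ y z, S y * dist (Φ y) (Φ z) ≤ C * dist y z) (φ : 𝓓(Ω, ℝ)) :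
    ‖∫ x, (∂_{e} φ) x • Φ (u x) ∂μ‖ₑ ≤ ∫⁻ x in Ω,
      ‖φ x‖ₑ * (ENNReal.ofReal (C + 2 * Δ) / ENNReal.ofReal (S (u x)) * ‖u' x‖ₑ) ∂μ := by
  have hlim : Tendsto (fun ε ↦ ∫ x, (∂_{e} φ) x • damping S Φ ε (u x) ∂μ) (𝓝[>] 0)
      (𝓝 (∫ x, (∂_{e} φ) x • Φ (u x) ∂μ)) := by
    rw [← setIntegral_testFunction_smul (∂_{e} φ)]
    refine .congr (fun ε ↦ setIntegral_testFunction_smul (∂_{e} φ) _) ?_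
    refine tendsto_integral_filter_of_dominated_convergence (fun x ↦ ‖(∂_{e} φ) x‖ * Δ) ?_ ?_ ?_ ?_
    · filter_upwards [self_mem_nhdsWithin] with ε hε
      exact (∂_{e} φ).continuous.aestronglyMeasurable.smul
        ((continuous_damping hε hS0 hS hΔ hΦ).comp_aestronglyMeasurable hu.1)
    · refine .of_forall fun ε ↦ .of_forall fun x ↦ (norm_smul_le _ _).trans ?_
      gcongr
      exact (norm_damping_le ε (hS0 _)).trans (hΔ _)
    · exact (((∂_{e} φ).continuous.integrable_of_hasCompactSupport
        (∂_{e} φ).hasCompactSupport).norm.mul_const Δ).integrableOn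
    · filter_upwards [hpos] with x hx using (tendsto_damping Φ hx).const_smul _
  refine le_of_tendsto hlim.enorm ?_
  filter_upwards [self_mem_nhdsWithin] with ε hε
  exact h.enorm_integral_lineDerivOp_smul_damping_le hΩ hu hu' hS0 hS hΔ hΦ hε φ

theorem HasWeakFDerivOn.exists_comp [FiniteDimensional ℝ G] {Du : E → E →L[ℝ] F}
    (h : HasWeakFDerivOn μ u Du Ω) (hΩ : μ Ω ≠ ⊤) (hu : IntegrableOn u Ω μ)
    (hDu : IntegrableOn Du Ω μ) (hS0 : ∀ y, 0 ≤ S y) (hS : LipschitzWith 1 S)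
    (hpos : ∀ᵐ x ∂μ.restrict Ω, 0 < S (u x)) (hΔ : ∀ y, ‖Φ y‖ ≤ Δ)
    (hΦ : ∀ y z, S y * dist (Φ y) (Φ z) ≤ C * dist y z)
    (hfin : ∫⁻ x in Ω, ‖Du x‖ₑ / ENNReal.ofReal (S (u x)) ∂μ ≠ ⊤) :
    IntegrableOn (fun x ↦ Φ (u x)) Ω μ ∧ ∃ Dw : E → E →L[ℝ] G, IntegrableOn Dw Ω μ ∧
      HasWeakFDerivOn μ (fun x ↦ Φ (u x)) Dw Ω ∧ ∀ᵐ x ∂μ.restrict Ω,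
        ‖Dw x‖ₑ ≤ ENNReal.ofReal (C + 2 * Δ) * (‖Du x‖ₑ / ENNReal.ofReal (S (u x))) := by
  have hw : IntegrableOn (fun x ↦ Φ (u x)) Ω μ :=
    .of_bound hΩ.lt_top (aestronglyMeasurable_comp_of_mul_dist_le hu.1 hpos hS0 hS hΔ hΦ) Δ
      (.of_forall fun x ↦ hΔ _)
  refine ⟨hw, exists_hasWeakFDerivOn_of_enorm_integral_le hw ?_ ?_ fun e φ ↦ ?_⟩
  · have := hS.continuous.comp_aestronglyMeasurable hu.1
    exact (hDu.1.enorm.div this.aemeasurable.ennreal_ofReal).const_mul _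
  · rw [lintegral_const_mul' _ _ ENNReal.ofReal_ne_top]
    exact ENNReal.mul_ne_top ENNReal.ofReal_ne_top hfin
  · refine ((h e).enorm_integral_lineDerivOp_smul_comp_le hΩ hu
      (hDu.apply_continuousLinearMap e) hS0 hS hpos hΔ hΦ φ).trans (lintegral_mono fun x ↦ ?_)
    gcongr ‖φ x‖ₑ * ?_
    calc _ ≤ ENNReal.ofReal (C + 2 * Δ) / ENNReal.ofReal (S (u x)) * (‖Du x‖ₑ * ‖e‖ₑ) := by
          gcongr
          exact (Du x).le_opENorm e
      _ = _ := by simp only [div_eq_mul_inv]; ring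

end Composition

section Projection

open TopologicalSpace (Opens)

theorem IsLipschitzNhdRetract.exists_comp_hasWeakFDerivOn {F : Type*} [NormedAddCommGroup F]
    [NormedSpace ℝ F] [FiniteDimensional ℝ F] {M : Set F} (hM : IsLipschitzNhdRetract M)
    (hcpt : IsCompact M) (hconn : IsConnected M) :
    ∃ K : ℝ≥0, ∀ {E : Type*} [NormedAddCommGroup E] [NormedSpace ℝ E] [FiniteDimensional ℝ E]
      [MeasurableSpace E] [BorelSpace E] {μ : Measure E} [μ.IsAddHaarMeasure] {Ω : Opens E}
      {u : E → F} {Du : E → E →L[ℝ] F}, μ Ω ≠ ⊤ → IntegrableOn u Ω μ → IntegrableOn Du Ω μ →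
      HasWeakFDerivOn μ u Du Ω → ∃ Φ : F → F, (∀ y, Φ y ∈ M) ∧ EqOn Φ id M ∧
        IntegrableOn (fun x ↦ Φ (u x)) Ω μ ∧ ∃ Dw : E → E →L[ℝ] F, IntegrableOn Dw Ω μ ∧
          HasWeakFDerivOn μ (fun x ↦ Φ (u x)) Dw Ω ∧
          ∫⁻ x in Ω, ‖Dw x‖ₑ ∂μ ≤ K * ∫⁻ x in Ω, ‖Du x‖ₑ ∂μ := by
  borelize F
  have : ProperSpace F := .of_locallyCompactSpace ℝ
  have : CompleteSpace F := FiniteDimensional.complete ℝ F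
  obtain ⟨ρ, hρ, t, C, hproj⟩ := hM.exists_singular_projection hcpt hconn
  obtain ⟨Δ, hΔ⟩ := hcpt.isBounded.exists_norm_le
  have hB0 : volume (Icc ρ (2 * ρ) ×ˢ Icc (3 * ρ) (4 * ρ)) ≠ 0 := by
    rw [Measure.volume_eq_prod, Measure.prod_prod, Real.volume_Icc, Real.volume_Icc]
    exact mul_ne_zero (ENNReal.ofReal_pos.2 (by linarith)).ne'
      (ENNReal.ofReal_pos.2 (by linarith)).ne'
  obtain ⟨A, hA⟩ := exists_netGap_pos_and_lintegral_le M t hρ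
    (measurableSet_Icc.prod measurableSet_Icc) hB0
    (isCompact_Icc.prod isCompact_Icc).measure_lt_top.ne
  refine ⟨(C + 2 * Δ).toNNReal * A, fun {E _ _ _ _ _ μ _ Ω u Du} hΩ hu hDu hweak ↦ ?_⟩
  have : IsFiniteMeasure (μ.restrict Ω) := isFiniteMeasure_restrict.2 hΩ
  obtain ⟨q, hq, hpos, hgap⟩ := hA hu.aemeasurable hDu.1.enorm
  obtain ⟨Φ, hΦM, hΦid, hΦ⟩ := hproj q hq
  obtain ⟨hw, Dw, hDw, hDwweak, hle⟩ := hweak.exists_comp hΩ hu hDu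
    (fun _ ↦ netGap_nonneg hρ.le) lipschitzWith_netGap hpos (fun y ↦ hΔ _ (hΦM y)) hΦ
    (ne_top_of_le_ne_top (ENNReal.mul_ne_top ENNReal.coe_ne_top hDu.2.ne) hgap)
  refine ⟨Φ, hΦM, hΦid, hw, Dw, hDw, hDwweak, ?_⟩
  calc ∫⁻ x in Ω, ‖Dw x‖ₑ ∂μ
    _ ≤ ENNReal.ofReal (C + 2 * Δ) *
          ∫⁻ x in Ω, ‖Du x‖ₑ / ENNReal.ofReal (netGap M t ρ q (u x)) ∂μ :=
      (lintegral_mono_ae hle).trans_eq (lintegral_const_mul' _ _ ENNReal.ofReal_ne_top)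
    _ ≤ ENNReal.ofReal (C + 2 * Δ) * (A * ∫⁻ x in Ω, ‖Du x‖ₑ ∂μ) := by gcongr
    _ = _ := by rw [← mul_assoc, ENNReal.coe_mul]; rfl

theorem integral_norm_le_mul_integral_norm {X F G : Type*} [NormedAddCommGroup F]
    [NormedAddCommGroup G] [MeasurableSpace X] {ν : Measure X} {f : X → F} {g : X → G} {K : ℝ≥0}
    (hf : AEStronglyMeasurable f ν) (hg : Integrable g ν)
    (h : ∫⁻ x, ‖f x‖ₑ ∂ν ≤ K * ∫⁻ x, ‖g x‖ₑ ∂ν) : ∫ x, ‖f x‖ ∂ν ≤ K * ∫ x, ‖g x‖ ∂ν := by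
  rw [integral_norm_eq_lintegral_enorm hf, integral_norm_eq_lintegral_enorm hg.1]
  simpa using ENNReal.toReal_mono (ENNReal.mul_ne_top ENNReal.coe_ne_top hg.2.ne) h

theorem ae_eq_restrict_of_eqOn {X Y : Type*} [TopologicalSpace Y]
    [TopologicalSpace.MetrizableSpace Y] [MeasurableSpace X] {μ : Measure X} {f g : X → Y}
    {s : Set X} (h : EqOn f g s) (hf : AEStronglyMeasurable f (μ.restrict s))
    (hg : AEStronglyMeasurable g (μ.restrict s)) : f =ᵐ[μ.restrict s] g :=
  (ae_restrict_iff₀ (hf.nullMeasurableSet_eq_fun hg)).2 (.of_forall h)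

theorem statement_3_general {d : ℕ} {M : Set (EN d)} (hcpt : IsCompact M) (hconn : IsConnected M)
    (hM : IsLipschitzNhdRetract M) :
    ∃ Cs : ℝ, 0 < Cs ∧ ∀ (N : ℕ) (Ω : Set (EN N)), IsOpen Ω → volume Ω ≠ ⊤ →
      ∀ (v : EN N → EN d) (Dv : EN N → Mat d N), MemW11 Ω v Dv →
      ∃ (w : EN N → EN d) (Dw : EN N → Mat d N), MemW11 Ω w Dw ∧ (∀ x, w x ∈ M) ∧
        (∀ x, v x ∈ M → w x = v x) ∧ ∫ x in Ω, ‖Dw x‖ ≤ Cs * ∫ x in Ω, ‖Dv x‖ := by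
  obtain ⟨K, hK⟩ := hM.exists_comp_hasWeakFDerivOn hcpt hconn
  refine ⟨K + 1, by positivity, fun N Ω hΩ hfin v Dv hv ↦ ?_⟩
  lift Ω to Opens (EN N) using hΩ
  obtain ⟨hvi, hDvi, hweak⟩ := memW11_iff_hasWeakFDerivOn.1 hv
  obtain ⟨Φ, hΦM, hΦid, hwi, Dw, hDwi, hDw, hle⟩ := hK hfin hvi hDvi hweak
  refine ⟨fun x ↦ Φ (v x), Dw, memW11_iff_hasWeakFDerivOn.2 ⟨hwi, hDwi, hDw⟩, fun x ↦ hΦM _,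
    fun x hx ↦ hΦid hx, (integral_norm_le_mul_integral_norm hDwi.1 hDvi hle).trans ?_⟩
  gcongr
  exact le_add_of_nonneg_right zero_le_one

end Projection

/-- Projection onto the manifold: every
`v ∈ W^{1,1}(Ω;ℝ^d) ∩ C^∞(Ω∖Σ;ℝ^d)` with values a.e. in `co(M)` can be
projected to some `w ∈ W^{1,1}(Ω;M)` agreeing with `v` where `v ∈ M`, with a
gradient estimate whose constant depends only on `d` and `M`. -/
theorem statement_3
    (d m : ℕ) (M : Set (EN d)) (hMne : M.Nonempty) (hMcpt : IsCompact M)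
    (hMconn : IsConnected M) (hMsub : IsSubmanifoldDim d m M) :
    ∃ Cs : ℝ, 0 < Cs ∧
      ∀ (N : ℕ) (Ω : Set (EN N)), IsOpen Ω → Bornology.IsBounded Ω →
      ∀ Sg : Set (EN N), IsSigmaSet N Sg →
      ∀ (v : EN N → EN d) (Dv : EN N → Mat d N),
        MemW11 Ω v Dv → ContDiffOn ℝ (⊤ : ℕ∞) v (Ω \ Sg) →
        (∀ᵐ x ∂(volume.restrict Ω), v x ∈ convexHull ℝ M) →
        ∃ (w : EN N → EN d) (Dw : EN N → Mat d N),
          MemW11 Ω w Dw ∧ AeIn Ω w M ∧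
          (∀ᵐ x ∂(volume.restrict {x ∈ Ω \ Sg | v x ∈ M}), w x = v x) ∧
          ∫ x in Ω, ‖Dw x‖ ≤ Cs * ∫ x in Ω, ‖Dv x‖ := by
  obtain ⟨Cs, hCs, h⟩ := statement_3_general hMcpt hMconn (hMsub.isLipschitzNhdRetract hMcpt)
  refine ⟨Cs, hCs, fun N Ω hΩ hb Sg _ v Dv hv _ _ ↦ ?_⟩
  obtain ⟨w, Dw, hw, hwM, hwv, hle⟩ := h N Ω hΩ hb.measure_lt_top.ne v Dv hv
  have hsub : {x ∈ Ω \ Sg | v x ∈ M} ⊆ Ω := fun x hx ↦ hx.1.1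
  exact ⟨w, Dw, hw, .of_forall hwM, ae_eq_restrict_of_eqOn (fun x hx ↦ hwv x hx.2)
    (hw.1.mono_set hsub).1 (hv.1.mono_set hsub).1, hle⟩
end

section
/- (Properties of the modified integrand g) Define g(y,s,ξ) := f(y, ℙ_s(ξ)) + |ξ − ℙ_s(ξ)|, where ℙ_s(ξ) := χ(s)·(P_{Π(s)}(ξ_1),…,P_{Π(s)}(ξ_N)) for ξ = (ξ_1,…,ξ_N) ∈ ℝ^{d×N}. Then g is a Carathéodory function satisfying: g(y,s,ξ) = f(y,ξ) and g^∞(y,s,ξ) = f^∞(y,ξ) whenever s ∈ M and ξ ∈ [T_s M]^N; (i) g is 1-periodic in y; (ii) there exist 0 < α′ ≤ β′ with α′|ξ| ≤ g(y,s,ξ) ≤ β′(1+|ξ|) for all (s,ξ) and a.e. y; (iii) there exist C, C′ > 0 with |g(y,s,ξ) − g(y,s′,ξ)| ≤ C|s−s′||ξ| and |g(y,s,ξ) − g(y,s,ξ′)| ≤ C′|ξ−ξ′| for all s, s′ ∈ ℝ^d, ξ, ξ′ ∈ ℝ^{d×N} and a.e. y; (iv) if in addition (H4) holds for f, then there exist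 C″ > 0 and 0 < q < 1 with |g(y,s,ξ) − g^∞(y,s,ξ)| ≤ C″(1+|ξ|^{1−q}) for all (s,ξ) and a.e. y, where g^∞(y,s,ξ) := limsup_{t→∞} g(y,s,tξ)/t. -/
open MeasureTheory Filter Set
open scoped ENNReal RealInnerProductSpace Topology NNReal

/-!
For fixed `y` and `s` the integrand is `h (A ξ) + ‖ξ - A ξ‖` with `h = f y` and `A = ℙ_s` a linear
operator on `ℝ^{d×N}` with `‖A‖ ≤ 1`. Growth, Lipschitz continuity in `ξ` and in `A`, and the
formula `h^∞ (A ξ) + ‖ξ - A ξ‖` for the recession function, which turns (H4) for `h` into (H4) for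
the modified integrand, hold for any such `A` on any normed space. The geometry enters only through
`s ↦ ℙ_s`: an orthogonal projection has norm at most one, and a Lipschitz cut-off vanishing off the
neighborhood where `s ↦ P_{Π(s)}` is Lipschitz makes the product globally Lipschitz.
-/

section CutOff

variable {X E : Type*} [PseudoMetricSpace X] [SeminormedAddCommGroup E] [NormedSpace ℝ E]

theorem lipschitzWith_smul_of_forall_notMem_eq_zero {χ : X → ℝ} {F : X → E} {U : Set X}
    {Kχ KF a b : ℝ≥0} (hχ : LipschitzWith Kχ χ) (hF : LipschitzOnWith KF F U)
    (hχ_zero : ∀ x ∉ U, χ x = 0) (hχ_le : ∀ x, ‖χ x‖ ≤ a) (hF_le : ∀ x ∈ U, ‖F x‖ ≤ b) :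
    LipschitzWith (Kχ * b + a * KF) fun x => χ x • F x := by
  have dist_le_of_mem : ∀ x ∈ U, ∀ y,
      dist (χ x • F x) (χ y • F y) ≤ (Kχ * b + a * KF) * dist x y := by
    intro x hx y
    have hχ_part : ‖(χ x - χ y) • F x‖ ≤ Kχ * dist x y * b := by
      rw [norm_smul, ← dist_eq_norm]
      exact mul_le_mul (hχ.dist_le_mul x y) (hF_le x hx) (norm_nonneg _) (by positivity)
    have hF_part : ‖χ y • (F x - F y)‖ ≤ a * (KF * dist x y) := by
      by_cases hy : y ∈ U
      · rw [norm_smul, ← dist_eq_norm]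
        exact mul_le_mul (hχ_le y) (hF.dist_le_mul x hx y hy) dist_nonneg a.coe_nonneg
      · rw [hχ_zero y hy, zero_smul, norm_zero]
        positivity
    calc dist (χ x • F x) (χ y • F y)
        = ‖(χ x - χ y) • F x + χ y • (F x - F y)‖ := by rw [dist_eq_norm]; congr 1; module
      _ ≤ Kχ * dist x y * b + a * (KF * dist x y) := norm_add_le_of_le hχ_part hF_part
      _ = (Kχ * b + a * KF) * dist x y := by ring
  refine LipschitzWith.of_dist_le_mul fun x y => ?_
  push_cast
  by_cases hx : x ∈ U
  · exact dist_le_of_mem x hx y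
  by_cases hy : y ∈ U
  · rw [dist_comm, dist_comm x]
    exact dist_le_of_mem y hy x
  · rw [hχ_zero x hx, hχ_zero y hy, zero_smul, zero_smul, dist_self]
    positivity

end CutOff

section ModifiedIntegrand

variable {V : Type*} [SeminormedAddCommGroup V] [NormedSpace ℝ V]
  {h : V → ℝ} {A : V →L[ℝ] V} {v : V} {L : ℝ≥0}

/-- The integrand `h` precomposed with the operator `A` (in applications a cut-off projection) and
made coercive again by the defect `‖v - A v‖`; `gOf` is the case `h = f y`, `A = ℙ_s`. -/
noncomputable def modifiedIntegrand (h : V → ℝ) (A : V →L[ℝ] V) (v : V) : ℝ :=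
  h (A v) + ‖v - A v‖

/-- The recession function `h^∞ v = limsup_{t → ∞} h (t v) / t` on a normed space; `recc` is the
case of matrices. As for `recc`, the limsup is real-valued, so it has a junk value when the
quotients are unbounded. -/
noncomputable def recessionFunction (h : V → ℝ) (v : V) : ℝ :=
  limsup (fun t : ℝ => h (t • v) / t) atTop

theorem modifiedIntegrand_of_apply_eq_self (hv : A v = v) : modifiedIntegrand h A v = h v := by
  simp [modifiedIntegrand, hv]

theorem recessionFunction_modifiedIntegrand_of_apply_eq_self (hv : A v = v) :
    recessionFunction (modifiedIntegrand h A) v = recessionFunction h v := by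
  have hsmul (t : ℝ) : modifiedIntegrand h A (t • v) = h (t • v) :=
    modifiedIntegrand_of_apply_eq_self (by rw [map_smul, hv])
  simp only [recessionFunction, hsmul]

theorem min_mul_norm_le_modifiedIntegrand {α : ℝ} (hα : 0 ≤ α) (hh : ∀ w, α * ‖w‖ ≤ h w) :
    min α 1 * ‖v‖ ≤ modifiedIntegrand h A v :=
  calc min α 1 * ‖v‖
      ≤ min α 1 * (‖A v‖ + ‖v - A v‖) := by
        gcongr
        exact norm_le_norm_add_norm_sub' v (A v)
    _ = min α 1 * ‖A v‖ + min α 1 * ‖v - A v‖ := mul_add _ _ _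
    _ ≤ α * ‖A v‖ + 1 * ‖v - A v‖ := by
        gcongr
        exacts [min_le_left α 1, min_le_right α 1]
    _ ≤ modifiedIntegrand h A v := by
        rw [one_mul, modifiedIntegrand]
        gcongr
        exact hh _

theorem modifiedIntegrand_le {β : ℝ} (hβ : 0 ≤ β) (hA : ‖A‖ ≤ 1)
    (hh : ∀ w, h w ≤ β * (1 + ‖w‖)) : modifiedIntegrand h A v ≤ (β + 2) * (1 + ‖v‖) := by
  have hAv : ‖A v‖ ≤ ‖v‖ := by simpa using A.le_of_opNorm_le hA v
  calc modifiedIntegrand h A v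
      ≤ β * (1 + ‖A v‖) + (‖v‖ + ‖A v‖) := add_le_add (hh _) (norm_sub_le _ _)
    _ ≤ β * (1 + ‖v‖) + (‖v‖ + ‖v‖) := by gcongr
    _ ≤ (β + 2) * (1 + ‖v‖) := by linarith

theorem continuous_modifiedIntegrand {X : Type*} [TopologicalSpace X] {T : X → V →L[ℝ] V}
    (hh : Continuous h) (hT : Continuous T) :
    Continuous fun p : X × V => modifiedIntegrand h (T p.1) p.2 := by
  unfold modifiedIntegrand
  fun_prop

theorem lipschitzWith_modifiedIntegrand (hh : LipschitzWith L h) (hA : ‖A‖ ≤ 1) :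
    LipschitzWith (L + 2) (modifiedIntegrand h A) := by
  have hA_lip : LipschitzWith 1 A := A.lipschitz.weaken hA
  have hdefect : LipschitzWith 2 fun v => ‖v - A v‖ :=
    (lipschitzWith_one_norm.comp (LipschitzWith.id.sub hA_lip)).weaken (by norm_num)
  exact ((hh.comp hA_lip).add hdefect).weaken (by rw [mul_one])

theorem lipschitzWith_modifiedIntegrand_operator (hh : LipschitzWith L h) (v : V) :
    LipschitzWith ((L + 1) * ‖v‖₊) fun A : V →L[ℝ] V => modifiedIntegrand h A v := by
  have hdefect : LipschitzWith 1 fun w : V => ‖v - w‖ := by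
    simpa only [← dist_eq_norm] using LipschitzWith.dist_right v
  exact (hh.add hdefect).comp (ContinuousLinearMap.lipschitz_apply v)

theorem isBoundedUnder_abs_div_of_linear_growth {β : ℝ} (hh : ∀ w, |h w| ≤ β * (1 + ‖w‖)) (v : V) :
    IsBoundedUnder (· ≤ ·) atTop fun t : ℝ => |h (t • v) / t| := by
  have hβ : 0 ≤ β := by simpa using (abs_nonneg _).trans (hh 0)
  refine isBoundedUnder_of_eventually_le (a := β * (1 + ‖v‖)) ?_
  filter_upwards [eventually_ge_atTop (1 : ℝ)] with t ht
  have ht_pos : 0 < t := one_pos.trans_le ht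
  rw [abs_div, abs_of_pos ht_pos, div_le_iff₀ ht_pos]
  calc |h (t • v)| ≤ β * (1 + ‖t • v‖) := hh _
    _ = β * (1 + t * ‖v‖) := by rw [norm_smul_of_nonneg ht_pos.le]
    _ ≤ β * (t + t * ‖v‖) := by gcongr
    _ = β * (1 + ‖v‖) * t := by ring

theorem recessionFunction_modifiedIntegrand {β : ℝ} (hh : ∀ w, |h w| ≤ β * (1 + ‖w‖)) :
    recessionFunction (modifiedIntegrand h A) v = recessionFunction h (A v) + ‖v - A v‖ := by
  obtain ⟨hle, hge⟩ := isBoundedUnder_le_abs.1 (isBoundedUnder_abs_div_of_linear_growth hh (A v))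
  rw [recessionFunction, recessionFunction, ← limsup_add_const _ _ _ hle hge.isCoboundedUnder_le]
  refine limsup_congr ?_
  filter_upwards [eventually_gt_atTop (0 : ℝ)] with t ht
  rw [modifiedIntegrand, map_smul, ← smul_sub, norm_smul_of_nonneg ht.le, add_div,
    mul_div_cancel_left₀ _ ht.ne']

theorem abs_modifiedIntegrand_sub_recessionFunction_le {β C p : ℝ} (hA : ‖A‖ ≤ 1)
    (hh : ∀ w, |h w| ≤ β * (1 + ‖w‖)) (hC : 0 ≤ C) (hp : 0 ≤ p)
    (hrec : ∀ w, |h w - recessionFunction h w| ≤ C * (1 + ‖w‖ ^ p)) :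
    |modifiedIntegrand h A v - recessionFunction (modifiedIntegrand h A) v| ≤
      C * (1 + ‖v‖ ^ p) := by
  have hAv : ‖A v‖ ≤ ‖v‖ := by simpa using A.le_of_opNorm_le hA v
  rw [recessionFunction_modifiedIntegrand hh, modifiedIntegrand, add_sub_add_right_eq_sub]
  calc |h (A v) - recessionFunction h (A v)| ≤ C * (1 + ‖A v‖ ^ p) := hrec _
    _ ≤ C * (1 + ‖v‖ ^ p) := by gcongr

end ModifiedIntegrand

section LeftComposition

variable {E F G : Type*} [SeminormedAddCommGroup E] [NormedSpace ℝ E]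
  [SeminormedAddCommGroup F] [NormedSpace ℝ F] [SeminormedAddCommGroup G] [NormedSpace ℝ G]

theorem norm_compL_apply_le (A : F →L[ℝ] G) : ‖ContinuousLinearMap.compL ℝ E F G A‖ ≤ ‖A‖ :=
  ContinuousLinearMap.opNorm_le_bound _ (norm_nonneg A) fun B => A.opNorm_comp_le B

theorem lipschitzWith_compL : LipschitzWith 1 (ContinuousLinearMap.compL ℝ E F G) :=
  AddMonoidHomClass.lipschitz_of_bound_nnnorm (ContinuousLinearMap.compL ℝ E F G) 1 fun A => by
    rw [one_mul]
    exact norm_compL_apply_le A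

end LeftComposition

section ProjData

variable {N d : ℕ} {M : Set (EN d)} {s : EN d}

theorem ProjData.norm_tanProj_le_one (D : ProjData M) (hs : s ∈ M) : ‖D.tanProj s‖ ≤ 1 := by
  have hidem : IsIdempotentElem (D.tanProj s).toLinearMap :=
    LinearMap.ext fun v => D.tanProj_id s hs _ (D.tanProj_mem s hs v)
  exact IsStarProjection.norm_le _
    (ContinuousLinearMap.isStarProjection_iff_isSymmetricProjection.2
      ⟨hidem, D.tanProj_symm s hs⟩)

theorem ProjData.chi_eq_zero_of_le_infDist (D : ProjData M) (hs : D.δ₀ ≤ Metric.infDist s M) :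
    D.chi s = 0 :=
  D.chi_zero s (by linarith [D.δ₀_pos])

theorem ProjData.norm_chi_le_one (D : ProjData M) (s : EN d) : ‖D.chi s‖ ≤ 1 := by
  rw [Real.norm_of_nonneg (D.chi_range s).1]
  exact (D.chi_range s).2

theorem ProjData.pr_eq_self (D : ProjData M) (hs : s ∈ M) : D.pr s = s := by
  have hdist : Metric.infDist s M = 0 := Metric.infDist_zero_of_mem hs
  have hnearest := D.pr_nearest s (hdist.trans_lt D.δ₀_pos)
  rw [hdist, norm_eq_zero, sub_eq_zero] at hnearest
  exact hnearest.symm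

/-- The operator `χ(s) P_{Π(s)}` on `ℝ^d`, which `ℙ_s` applies to each column of a matrix. -/
noncomputable def ProjData.cutoffTanProj (D : ProjData M) (s : EN d) : EN d →L[ℝ] EN d :=
  D.chi s • D.tanProj (D.pr s)

theorem ProjData.norm_cutoffTanProj_le_one (D : ProjData M) (s : EN d) :
    ‖D.cutoffTanProj s‖ ≤ 1 := by
  rw [cutoffTanProj, norm_smul]
  by_cases hs : Metric.infDist s M < D.δ₀
  · exact mul_le_one₀ (D.norm_chi_le_one s) (norm_nonneg _) (D.norm_tanProj_le_one (D.pr_mem s hs))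
  · rw [D.chi_eq_zero_of_le_infDist (not_lt.1 hs), norm_zero, zero_mul]
    exact zero_le_one

theorem ProjData.exists_lipschitzWith_cutoffTanProj (D : ProjData M) :
    ∃ K : ℝ≥0, 0 < K ∧ LipschitzWith K D.cutoffTanProj := by
  obtain ⟨Kχ, hχ⟩ := D.chi_smooth.lipschitzWith_of_hasCompactSupport D.chi_supp (by simp)
  obtain ⟨KP, hP⟩ := D.tanProj_lip
  have hcutoff : LipschitzWith (Kχ * 1 + 1 * KP) D.cutoffTanProj :=
    lipschitzWith_smul_of_forall_notMem_eq_zero hχ hP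
      (fun _ hs => D.chi_eq_zero_of_le_infDist (not_lt.1 hs)) D.norm_chi_le_one
      (fun s hs => D.norm_tanProj_le_one (D.pr_mem s hs))
  exact ⟨Kχ * 1 + 1 * KP + 1, by positivity, hcutoff.weaken le_self_add⟩

theorem ProjData.cutoffTanProj_of_mem (D : ProjData M) (hs : s ∈ M) :
    D.cutoffTanProj s = D.tanProj s := by
  have hdist : Metric.infDist s M = 0 := Metric.infDist_zero_of_mem hs
  have hchi : D.chi s = 1 := D.chi_one s (hdist.trans_le (half_pos D.δ₀_pos).le)
  rw [cutoffTanProj, hchi, one_smul, D.pr_eq_self hs]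

/-- The map `ξ ↦ ℙ_s(ξ)` of `tanP` as a continuous linear operator on matrices, so that its
dependence on `s` can be measured in operator norm. -/
noncomputable def ProjData.cutoffColProj (D : ProjData M) (N : ℕ) (s : EN d) :
    Mat d N →L[ℝ] Mat d N :=
  ContinuousLinearMap.compL ℝ (EN N) (EN d) (EN d) (D.cutoffTanProj s)

theorem ProjData.norm_cutoffColProj_le_one (D : ProjData M) (N : ℕ) (s : EN d) :
    ‖D.cutoffColProj N s‖ ≤ 1 :=
  (norm_compL_apply_le _).trans (D.norm_cutoffTanProj_le_one s)

theorem ProjData.exists_lipschitzWith_cutoffColProj (D : ProjData M) (N : ℕ) :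
    ∃ K : ℝ≥0, 0 < K ∧ LipschitzWith K (D.cutoffColProj N) := by
  obtain ⟨K, hK_pos, hK⟩ := D.exists_lipschitzWith_cutoffTanProj
  exact ⟨1 * K, by positivity, lipschitzWith_compL.comp hK⟩

theorem ProjData.cutoffColProj_apply_of_tangentCols (D : ProjData M) (hs : s ∈ M) {ξ : Mat d N}
    (hξ : TangentCols M s ξ) : D.cutoffColProj N s ξ = ξ := by
  refine ContinuousLinearMap.coe_injective
    ((EuclideanSpace.basisFun (Fin N) ℝ).toBasis.ext fun i => ?_)
  simpa [cutoffColProj, D.cutoffTanProj_of_mem hs] using D.tanProj_id s hs _ (hξ i)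

theorem gOf_eq_modifiedIntegrand (D : ProjData M) (f : EN N → Mat d N → ℝ) (y : EN N) (s : EN d) :
    gOf D f y s = modifiedIntegrand (f y) (D.cutoffColProj N s) :=
  rfl

theorem recc_eq_recessionFunction (h : Mat d N → ℝ) : recc h = recessionFunction h :=
  rfl

end ProjData

section StdIntegrand

variable {N d : ℕ} {f : EN N → Mat d N → ℝ} {α β L : ℝ}

theorem StdIntegrand.ae_lipschitzWith (hf : StdIntegrand N d f α β L) :
    ∀ᵐ y, LipschitzWith L.toNNReal (f y) := by
  filter_upwards [hf.lip] with y hy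
  exact LipschitzWith.of_dist_le' fun ξ ξ' => by
    rw [Real.dist_eq, dist_eq_norm]
    exact hy ξ ξ'

theorem StdIntegrand.ae_abs_le (hf : StdIntegrand N d f α β L) :
    ∀ᵐ y, ∀ ξ, |f y ξ| ≤ β * (1 + ‖ξ‖) := by
  filter_upwards [hf.growth] with y hy ξ
  rw [abs_of_nonneg (hf.nonneg y ξ)]
  exact (hy ξ).2

end StdIntegrand

theorem statement_4_general
    (N d : ℕ) (M : Set (EN d))
    (f : EN N → Mat d N → ℝ) (α β L : ℝ) (hf : StdIntegrand N d f α β L)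
    (D : ProjData M) :
    ((∀ (s : EN d) (ξ : Mat d N), Measurable fun y => gOf D f y s ξ) ∧
      (∀ᵐ y ∂(volume : Measure (EN N)),
        Continuous fun p : EN d × Mat d N => gOf D f y p.1 p.2)) ∧
    (∀ s ∈ M, ∀ ξ : Mat d N, TangentCols M s ξ →
      (∀ y, gOf D f y s ξ = f y ξ) ∧ (∀ y, recc (gOf D f y s) ξ = recc (f y) ξ)) ∧
    (∀ (y : EN N) (s : EN d) (ξ : Mat d N) (i : Fin N),
      gOf D f (y + EuclideanSpace.single i 1) s ξ = gOf D f y s ξ) ∧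
    (∃ α' β' : ℝ, 0 < α' ∧ α' ≤ β' ∧
      ∀ᵐ y ∂(volume : Measure (EN N)), ∀ (s : EN d) (ξ : Mat d N),
        α' * ‖ξ‖ ≤ gOf D f y s ξ ∧ gOf D f y s ξ ≤ β' * (1 + ‖ξ‖)) ∧
    (∃ C C' : ℝ, 0 < C ∧ 0 < C' ∧
      ∀ᵐ y ∂(volume : Measure (EN N)), ∀ (s s' : EN d) (ξ ξ' : Mat d N),
        |gOf D f y s ξ - gOf D f y s' ξ| ≤ C * ‖s - s'‖ * ‖ξ‖ ∧
        |gOf D f y s ξ - gOf D f y s ξ'| ≤ C' * ‖ξ - ξ'‖) ∧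
    (∀ C₀ q₀ : ℝ, H4 f C₀ q₀ →
      ∃ C'' q : ℝ, 0 < C'' ∧ 0 < q ∧ q < 1 ∧
        ∀ᵐ y ∂(volume : Measure (EN N)), ∀ (s : EN d) (ξ : Mat d N),
          |gOf D f y s ξ - recc (gOf D f y s) ξ| ≤ C'' * (1 + ‖ξ‖ ^ (1 - q))) := by
  have hβ : 0 < β := hf.alpha_pos.trans_le hf.alpha_le_beta
  obtain ⟨K, hK_pos, hK⟩ := D.exists_lipschitzWith_cutoffColProj N
  simp only [recc_eq_recessionFunction, H4, gOf_eq_modifiedIntegrand]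
  refine ⟨⟨fun s ξ => (hf.meas _).add_const _, ?_⟩, fun s hs ξ hξ => ?_, fun y s ξ i => ?_,
    ⟨min α 1, β + 2, lt_min hf.alpha_pos one_pos, (min_le_right _ _).trans (by linarith), ?_⟩,
    ⟨(L.toNNReal + 1) * K, L.toNNReal + 2, by positivity, by positivity, ?_⟩, ?_⟩
  · filter_upwards [hf.ae_lipschitzWith] with y hy
    exact continuous_modifiedIntegrand hy.continuous hK.continuous
  · have hfix := D.cutoffColProj_apply_of_tangentCols hs hξ
    exact ⟨fun _ => modifiedIntegrand_of_apply_eq_self hfix,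
      fun _ => recessionFunction_modifiedIntegrand_of_apply_eq_self hfix⟩
  · simp only [modifiedIntegrand, hf.periodic]
  · filter_upwards [hf.growth] with y hy s ξ
    exact ⟨min_mul_norm_le_modifiedIntegrand hf.alpha_pos.le fun w => (hy w).1,
      modifiedIntegrand_le hβ.le (D.norm_cutoffColProj_le_one N s) fun w => (hy w).2⟩
  · filter_upwards [hf.ae_lipschitzWith] with y hy s s' ξ ξ'
    have hs := ((lipschitzWith_modifiedIntegrand_operator hy ξ).comp hK).dist_le_mul s s'
    have hξ := (lipschitzWith_modifiedIntegrand hy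
      (D.norm_cutoffColProj_le_one N s)).dist_le_mul ξ ξ'
    simp only [Function.comp_apply, dist_eq_norm] at hs hξ
    exact ⟨hs.trans_eq (by push_cast; ring), hξ⟩
  · rintro C₀ q₀ ⟨hC, hq, hq_lt, hrec⟩
    refine ⟨C₀, q₀, hC, hq, hq_lt, ?_⟩
    filter_upwards [hrec, hf.ae_abs_le] with y hy_rec hy_le s ξ
    exact abs_modifiedIntegrand_sub_recessionFunction_le (D.norm_cutoffColProj_le_one N s) hy_le
      hC.le (by linarith) hy_rec

/-- Properties of the modified integrand `g`:
`g(y,s,ξ) = f(y,ℙ_s(ξ)) + |ξ - ℙ_s(ξ)|` is Carathéodory, agrees with `f`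
(together with its recession function) on tangential pairs, is periodic in
`y`, has linear growth and coercivity, is Lipschitz in `s` and `ξ`, and
satisfies the recession estimate under (H4). -/
theorem statement_4
    (N d : ℕ) (M : Set (EN d)) (hM : IsNiceManifold d M)
    (f : EN N → Mat d N → ℝ) (α β L : ℝ) (hf : StdIntegrand N d f α β L)
    (D : ProjData M) :
    ((∀ (s : EN d) (ξ : Mat d N), Measurable fun y => gOf D f y s ξ) ∧
      (∀ᵐ y ∂(volume : Measure (EN N)),
        Continuous fun p : EN d × Mat d N => gOf D f y p.1 p.2)) ∧
    (∀ s ∈ M, ∀ ξ : Mat d N, TangentCols M s ξ →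
      (∀ y, gOf D f y s ξ = f y ξ) ∧ (∀ y, recc (gOf D f y s) ξ = recc (f y) ξ)) ∧
    (∀ (y : EN N) (s : EN d) (ξ : Mat d N) (i : Fin N),
      gOf D f (y + EuclideanSpace.single i 1) s ξ = gOf D f y s ξ) ∧
    (∃ α' β' : ℝ, 0 < α' ∧ α' ≤ β' ∧
      ∀ᵐ y ∂(volume : Measure (EN N)), ∀ (s : EN d) (ξ : Mat d N),
        α' * ‖ξ‖ ≤ gOf D f y s ξ ∧ gOf D f y s ξ ≤ β' * (1 + ‖ξ‖)) ∧
    (∃ C C' : ℝ, 0 < C ∧ 0 < C' ∧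
      ∀ᵐ y ∂(volume : Measure (EN N)), ∀ (s s' : EN d) (ξ ξ' : Mat d N),
        |gOf D f y s ξ - gOf D f y s' ξ| ≤ C * ‖s - s'‖ * ‖ξ‖ ∧
        |gOf D f y s ξ - gOf D f y s ξ'| ≤ C' * ‖ξ - ξ'‖) ∧
    (∀ C₀ q₀ : ℝ, H4 f C₀ q₀ →
      ∃ C'' q : ℝ, 0 < C'' ∧ 0 < q ∧ q < 1 ∧
        ∀ᵐ y ∂(volume : Measure (EN N)), ∀ (s : EN d) (ξ : Mat d N),
          |gOf D f y s ξ - recc (gOf D f y s) ξ| ≤ C'' * (1 + ‖ξ‖ ^ (1 - q))) := by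
  exact statement_4_general N d M f α β L hf D
end
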